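/- arXiv:1311.2863 — 2 statements merged into one kernel-verified Lean document; each statement's English description precedes it below -/
import Mathlib

section
/- Let D be a c-John domain in ℝⁿ, n ≥ 2. Then D can be written as the union of domains D₁, D₂, … such that (1) the closure of D_i is a compact subset of D_{i+1} for each i = 1, 2, …, and (2) each D_i is a c₁-John domain with c₁ = c₁(c, n) depending only on c and n. -/
open MeasureTheory Metric Set
open scoped ENNReal NNReal BigOperators

noncomputable section

/-- Euclidean `n`-space. -/
abbrev Eucl (n : ℕ) : Type := EuclideanSpace ℝ (Fin n)

/-- `D` is a `c`-John domain (bounded or unbounded): an open connected set such that each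
pair of points can be joined by a rectifiable curve, parametrized by arc length
(formalized as a `1`-Lipschitz parametrization on `[0, ℓ]`), along which
`dist(γ t, ∂D) ≥ min{t, ℓ - t}/c`. -/
def IsJohnDomain (n : ℕ) (c : ℝ) (D : Set (Eucl n)) : Prop :=
  IsOpen D ∧ IsConnected D ∧
    ∀ x₁ ∈ D, ∀ x₂ ∈ D, ∃ ℓ : ℝ, 0 ≤ ℓ ∧ ∃ γ : ℝ → Eucl n,
      γ 0 = x₁ ∧ γ ℓ = x₂ ∧ (∀ t ∈ Icc (0:ℝ) ℓ, γ t ∈ D) ∧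
      LipschitzOnWith 1 γ (Icc 0 ℓ) ∧
      ∀ t ∈ Icc (0:ℝ) ℓ, min t (ℓ - t) / c ≤ infDist (γ t) (frontier D)

/-- The ball `B(x, τ·dist(x, ∂G))`; by convention, if `∂G = ∅` (i.e. `G = ℝⁿ`)
it is all of `ℝⁿ`. -/
def tauBall (n : ℕ) (τ : ℝ) (G : Set (Eucl n)) (x : Eucl n) : Set (Eucl n) :=
  {y : Eucl n | edist x y < ENNReal.ofReal τ * EMetric.infEdist x (frontier G)}

/-- The fractional kernel `|u x - u y|^p / |x - y|^(n + δp)` as an extended real. -/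
def fracKernel (n : ℕ) (δ p : ℝ) (u : Eucl n → ℝ) (x y : Eucl n) : ℝ≥0∞ :=
  ENNReal.ofReal (|u x - u y| ^ p / dist x y ^ ((n : ℝ) + δ * p))

/-- The `p`-th power of the seminorm `|u|_{W^{δ,p}_τ(G)}`. -/
def fracEnergyTau (n : ℕ) (δ τ p : ℝ) (G : Set (Eucl n)) (u : Eucl n → ℝ) : ℝ≥0∞ :=
  ∫⁻ x in G, ∫⁻ y in tauBall n τ G x, fracKernel n δ p u x y ∂volume ∂volume

/-- The `p`-th power of the seminorm `|u|_{W^{δ,p}(G)}`. -/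
def fracEnergy (n : ℕ) (δ p : ℝ) (G : Set (Eucl n)) (u : Eucl n → ℝ) : ℝ≥0∞ :=
  ∫⁻ x in G, ∫⁻ y in G, fracKernel n δ p u x y ∂volume ∂volume

/-- The fractional `(δ,p)`-capacity of a compact set `K ⊆ G`:
`inf |u|_{W^{δ,p}(G)}^p` over `u ∈ C₀(G)` with `u ≥ 1` on `K`. -/
def fracCap (n : ℕ) (δ p : ℝ) (K G : Set (Eucl n)) : ℝ≥0∞ :=
  ⨅ (u : Eucl n → ℝ) (_ : Continuous u) (_ : HasCompactSupport u) (_ : tsupport u ⊆ G)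
    (_ : ∀ x ∈ K, 1 ≤ u x), fracEnergy n δ p G u

/-- The fractional `(δ,q,p)`-Hardy inequality holds in `G` with constant `C`. -/
def HasFracHardy (n : ℕ) (δ p q C : ℝ) (G : Set (Eucl n)) : Prop :=
  ∀ u : Eucl n → ℝ, Continuous u → HasCompactSupport u → tsupport u ⊆ G →
    (∫⁻ x in G, ENNReal.ofReal
        (|u x| ^ q / infDist x (frontier G) ^ (q * (δ + n * (1/q - 1/p)))) ∂volume)
      ≤ ENNReal.ofReal C * fracEnergy n δ p G u ^ (q / p)

/-- The closed axis-parallel cube with center `z` and half side length `r`. -/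
def cube (n : ℕ) (z : Eucl n) (r : ℝ) : Set (Eucl n) :=
  {x : Eucl n | ∀ i, |x i - z i| ≤ r}

/-- The quantity `|Q|^(-1-δ/n) ∫_Q |u - u_Q|` for the cube `Q = cube n z r`. -/
def aTerm (n : ℕ) (δ : ℝ) (u : Eucl n → ℝ) (z : Eucl n) (r : ℝ) : ℝ :=
  ((volume (cube n z r)).toReal) ^ (-(1:ℝ) - δ / n) *
    ∫ x in cube n z r, |u x - ⨍ y in cube n z r, u y ∂volume| ∂volume

/-- The seminorm `|u|_{A^{δ,p}_κ(G)}`: the supremum, over families `𝒬` of pairwise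
disjoint cubes `Q` (given by center-halfside pairs) with `κQ ⊆ G`, of the `L^p(G)`
norm of `∑_{Q ∈ 𝒬} (|Q|^(-1-δ/n) ∫_Q |u - u_Q|) χ_Q`. -/
def ASeminorm (n : ℕ) (κ δ p : ℝ) (G : Set (Eucl n)) (u : Eucl n → ℝ) : ℝ≥0∞ :=
  ⨆ (𝒬 : Set (Eucl n × ℝ)) (_ : ∀ c ∈ 𝒬, 0 < c.2 ∧ cube n c.1 (κ * c.2) ⊆ G)
    (_ : ∀ c ∈ 𝒬, ∀ c' ∈ 𝒬, c ≠ c' → cube n c.1 c.2 ∩ cube n c'.1 c'.2 = ∅),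
    (∫⁻ x in G,
        (∑' c : 𝒬, (cube n (c : Eucl n × ℝ).1 (c : Eucl n × ℝ).2).indicator
          (fun _ => ENNReal.ofReal (aTerm n δ u (c : Eucl n × ℝ).1 (c : Eucl n × ℝ).2)) x) ^ p
      ∂volume) ^ (1 / p)

/-- `Q` is a closed dyadic cube in `ℝⁿ`. -/
def IsDyadicCube (n : ℕ) (Q : Set (Eucl n)) : Prop :=
  ∃ (k : ℤ) (z : Fin n → ℤ),
    Q = {x : Eucl n | ∀ i, (z i : ℝ) * (2:ℝ) ^ k ≤ x i ∧ x i ≤ ((z i : ℝ) + 1) * (2:ℝ) ^ k}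

/-- `W` is a Whitney decomposition of the proper open set `G`: a countable family of
closed dyadic cubes with pairwise disjoint interiors whose union is `G`, with
`diam Q ≤ dist(Q, ∂G) ≤ 4 diam Q` for each cube `Q ∈ W`. -/
def IsWhitneyDecomposition (n : ℕ) (G : Set (Eucl n)) (W : Set (Set (Eucl n))) : Prop :=
  W.Countable ∧ (∀ Q ∈ W, IsDyadicCube n Q) ∧ ⋃₀ W = G ∧
    (W.Pairwise fun Q R => interior Q ∩ interior R = ∅) ∧
    ∀ Q ∈ W, (∀ x ∈ Q, Metric.diam Q ≤ infDist x (frontier G)) ∧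
      ∃ x ∈ Q, infDist x (frontier G) ≤ 4 * Metric.diam Q

/-- `lam` is an upper Assouad-type covering exponent for `E`: there is `C > 0` such
that for every `x ∈ E` and all `0 < r < R < 2 diam E`, the set `E ∩ B(x,R)` can be
covered by at most `C (R/r)^lam` balls centered in `E` of radius `r`. -/
def UpperAssouadBound (n : ℕ) (E : Set (Eucl n)) (lam : ℝ) : Prop :=
  ∃ C : ℝ, 0 < C ∧ ∀ x ∈ E, ∀ r R : ℝ, 0 < r → r < R →
    ENNReal.ofReal R < 2 * EMetric.diam E →
    ∃ F : Finset (Eucl n), ↑F ⊆ E ∧ (F.card : ℝ) ≤ C * (R / r) ^ lam ∧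
      E ∩ ball x R ⊆ ⋃ y ∈ F, ball y r

/-- The upper Assouad dimension of `E`. -/
def upperAssouadDim (n : ℕ) (E : Set (Eucl n)) : ℝ :=
  sInf {lam : ℝ | 0 ≤ lam ∧ UpperAssouadBound n E lam}

/-- `lam` is a lower Assouad-type exponent for `E`: there is `C > 0` such that for
every `x ∈ E` and all `0 < r < R < 2 diam E`, at least `C (R/r)^lam` balls centered
in `E` of radius `r` are needed to cover `E ∩ B(x,R)`. -/
def LowerAssouadBound (n : ℕ) (E : Set (Eucl n)) (lam : ℝ) : Prop :=
  ∃ C : ℝ, 0 < C ∧ ∀ x ∈ E, ∀ r R : ℝ, 0 < r → r < R →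
    ENNReal.ofReal R < 2 * EMetric.diam E →
    ∀ F : Finset (Eucl n), ↑F ⊆ E → (E ∩ ball x R ⊆ ⋃ y ∈ F, ball y r) →
      C * (R / r) ^ lam ≤ (F.card : ℝ)

/-- The lower Assouad dimension of `E`. -/
def lowerAssouadDim (n : ℕ) (E : Set (Eucl n)) : ℝ :=
  sSup {lam : ℝ | 0 ≤ lam ∧ LowerAssouadBound n E lam}

end

/-!
A John curve cut at its midpoint consists of two *carrots*: curves along which the distance to
the complement of `D` grows at least linearly with the arc length. Carrots compose, and if all
points of a set `G` are joined to one centre `z` by carrots inside `G`, then `G` is a John domain.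

Hence it suffices to join all points of a compact set `K ⊆ D` to a common centre with a constant
depending only on `c` and the ambient space; the union of the balls `B(w, dist(w, ∂D) / 2)` over
the points `w` of these carrots is then a relatively compact John domain containing `K`. If
`dist(·, ∂D)` is bounded on `D`, a point nearly maximizing it is a centre. Otherwise, for `K`
contained in a ball of large radius `R`, every point of `K` is joined to a point of `D` at distance
comparable to `R` from `∂D`. All these points lie in a ball of radius `2R`, so they are within
carrot reach of boundedly many of them, and those can be joined to one centre successively.
-/

open Bornology

section Topology

theorem exists_exhaustion_of_engulfing {X : Type*} [TopologicalSpace X] {D : Set X}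
    (hD : IsSigmaCompact D) {P : Set X → Prop}
    (h : ∀ K ⊆ D, IsCompact K →
      ∃ G, K ⊆ G ∧ closure G ⊆ D ∧ IsCompact (closure G) ∧ P G) :
    ∃ u : ℕ → Set X, (⋃ i, u i) = D ∧
      (∀ i, closure (u i) ⊆ u (i + 1) ∧ IsCompact (closure (u i))) ∧ ∀ i, P (u i) := by
  obtain ⟨K, hK, rfl⟩ := hD
  choose! engulf subset_engulf closure_subset isCompact_closure hP using h
  let L : ℕ → Set X := Nat.rec (K 0) fun i L => closure (engulf L) ∪ K (i + 1)
  have hL (i : ℕ) : L i ⊆ ⋃ j, K j ∧ IsCompact (L i) := by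
    induction i with
    | zero => exact ⟨subset_iUnion K 0, hK 0⟩
    | succ i ih =>
      exact ⟨union_subset (closure_subset _ ih.1 ih.2) (subset_iUnion K _),
        (isCompact_closure _ ih.1 ih.2).union (hK _)⟩
  have K_subset (i : ℕ) : K i ⊆ L i := by
    cases i with
    | zero => exact Subset.rfl
    | succ i => exact subset_union_right
  have L_subset (i : ℕ) : L i ⊆ engulf (L i) := subset_engulf _ (hL i).1 (hL i).2
  refine ⟨fun i => engulf (L i), Subset.antisymm ?_ ?_, fun i => ⟨?_, ?_⟩, fun i => ?_⟩
  · exact iUnion_subset fun i => subset_closure.trans (closure_subset _ (hL i).1 (hL i).2)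
  · exact iUnion_mono fun i => (K_subset i).trans (L_subset i)
  · exact subset_union_left.trans (L_subset (i + 1))
  · exact isCompact_closure _ (hL i).1 (hL i).2
  · exact hP _ (hL i).1 (hL i).2

theorem exists_forall_le_two_mul_of_bddAbove {α : Type*} {s : Set α} {f : α → ℝ}
    (hs : s.Nonempty) (hf : ∀ x ∈ s, 0 ≤ f x) (hb : BddAbove (f '' s)) :
    ∃ x ∈ s, ∀ y ∈ s, f y ≤ 2 * f x := by
  by_contra! h
  have le_sSup {x : α} (hx : x ∈ s) : f x ≤ sSup (f '' s) := le_csSup hb (mem_image_of_mem f hx)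
  have sSup_le_half : sSup (f '' s) ≤ sSup (f '' s) / 2 := by
    refine csSup_le (hs.image f) (forall_mem_image.2 fun x hx => ?_)
    obtain ⟨y, hy, hxy⟩ := h x hx
    linarith [le_sSup hy]
  obtain ⟨x, hx⟩ := hs
  obtain ⟨y, hy, hxy⟩ := h x hx
  linarith [hf x hx, le_sSup hy]

theorem isSigmaCompact_of_isOpen {X : Type*} [TopologicalSpace X] [LocallyCompactSpace X]
    [SecondCountableTopology X] {D : Set X} (hD : IsOpen D) : IsSigmaCompact D :=
  have := hD.locallyCompactSpace
  isSigmaCompact_iff_sigmaCompactSpace.2 inferInstance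

theorem inter_frontier_nonempty_of_isPreconnected {X : Type*} [TopologicalSpace X] {s D : Set X}
    (hs : IsPreconnected s) (hD : (s ∩ D).Nonempty) (hD' : (s ∩ Dᶜ).Nonempty) :
    (s ∩ frontier D).Nonempty := by
  rw [frontier_eq_closure_inter_closure]
  refine isPreconnected_closed_iff.1 hs _ _ isClosed_closure isClosed_closure (fun x _ => ?_)
    (hD.mono (inter_subset_inter_right s subset_closure))
    (hD'.mono (inter_subset_inter_right s subset_closure))
  exact (em (x ∈ D)).imp (fun h => subset_closure h) (fun h => subset_closure h)

end Topology

section Nets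

open scoped Pointwise

theorem exists_finset_net_card_le_of_totallyBounded {X : Type*} [PseudoMetricSpace X] {B : Set X}
    (hB : TotallyBounded B) {ε : ℝ} (hε : 0 < ε) :
    ∃ N : ℕ, ∀ Q ⊆ B, ∃ F : Finset X, ↑F ⊆ Q ∧ F.card ≤ N ∧ ∀ q ∈ Q, ∃ f ∈ F, dist q f ≤ ε := by
  lift ε to ℝ≥0 using hε.le
  have half_ne_zero : ε / 2 ≠ 0 := (half_pos (NNReal.coe_pos.1 hε)).ne'
  obtain ⟨C, -, hCfin, hC⟩ := exists_finite_isCover_of_totallyBounded half_ne_zero hB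
  refine ⟨hCfin.toFinset.card, fun Q hQ => ?_⟩
  have covering_le : coveringNumber ε Q ≤ hCfin.toFinset.card := by
    calc
      coveringNumber ε Q = coveringNumber (2 * (ε / 2)) Q := by rw [mul_div_cancel₀ _ two_ne_zero]
      _ ≤ externalCoveringNumber (ε / 2) Q := coveringNumber_two_mul_le_externalCoveringNumber _ _
      _ ≤ C.encard := (hC.anti hQ).externalCoveringNumber_le_encard
      _ = hCfin.toFinset.card := hCfin.encard_eq_coe_toFinset_card
  obtain ⟨F, hFQ, hFfin, hF, hFcard⟩ :=
    exists_set_encard_eq_coveringNumber (ne_top_of_le_ne_top (ENat.natCast_ne_top _) covering_le)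
  rw [← hFcard, hFfin.encard_eq_coe_toFinset_card, Nat.cast_le] at covering_le
  refine ⟨hFfin.toFinset, by simpa using hFQ, covering_le, fun q hq => ?_⟩
  obtain ⟨f, hf, hqf⟩ := mem_iUnion₂.1 (isCover_iff_subset_iUnion_closedBall.1 hF hq)
  exact ⟨f, hFfin.mem_toFinset.2 hf, hqf⟩

theorem exists_finset_net_card_le_of_subset_closedBall (E : Type*) [NormedAddCommGroup E]
    [NormedSpace ℝ E] [ProperSpace E] (r : ℝ) {ε : ℝ} (hε : 0 < ε) :
    ∃ N : ℕ, ∀ R : ℝ, 0 < R → ∀ Q ⊆ closedBall (0 : E) (R * r),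
      ∃ F : Finset E, ↑F ⊆ Q ∧ F.card ≤ N ∧ ∀ q ∈ Q, ∃ f ∈ F, dist q f ≤ R * ε := by
  classical
  obtain ⟨N, hN⟩ := exists_finset_net_card_le_of_totallyBounded
    (isCompact_closedBall (0 : E) r).totallyBounded hε
  refine ⟨N, fun R hR Q hQ => ?_⟩
  have rescaled_subset : R⁻¹ • Q ⊆ closedBall (0 : E) r := by
    rintro _ ⟨q, hq, rfl⟩
    have := mem_closedBall_zero_iff.1 (hQ hq)
    rw [mem_closedBall_zero_iff, norm_smul, norm_inv, Real.norm_of_nonneg hR.le]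
    exact (inv_mul_le_iff₀ hR).2 this
  obtain ⟨F, hFQ, hFcard, hF⟩ := hN _ rescaled_subset
  refine ⟨F.image (R • ·), ?_, Finset.card_image_le.trans hFcard, fun q hq => ?_⟩
  · rw [Finset.coe_image, image_subset_iff]
    intro f hf
    exact (mem_inv_smul_set_iff₀ hR.ne' Q f).1 (hFQ hf)
  · obtain ⟨f, hf, hqf⟩ := hF (R⁻¹ • q) (smul_mem_smul_set hq)
    refine ⟨R • f, Finset.mem_image_of_mem _ hf, ?_⟩
    calc dist q (R • f) = dist (R • R⁻¹ • q) (R • f) := by rw [smul_inv_smul₀ hR.ne']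
      _ = R * dist (R⁻¹ • q) f := by rw [dist_smul₀, Real.norm_of_nonneg hR.le]
      _ ≤ R * ε := by gcongr

end Nets

section Carrots

/-- The curve that follows `γ₁` up to time `a` and then `γ₂`, started at time `0`. -/
noncomputable def concatAt {X : Type*} (a : ℝ) (γ₁ γ₂ : ℝ → X) (t : ℝ) : X :=
  if t ≤ a then γ₁ t else γ₂ (t - a)

theorem concatAt_of_le {X : Type*} {a t : ℝ} (γ₁ γ₂ : ℝ → X) (h : t ≤ a) :
    concatAt a γ₁ γ₂ t = γ₁ t :=
  if_pos h

theorem concatAt_of_ge {X : Type*} {a t : ℝ} {γ₁ γ₂ : ℝ → X} (hγ : γ₁ a = γ₂ 0) (h : a ≤ t) :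
    concatAt a γ₁ γ₂ t = γ₂ (t - a) := by
  rcases h.eq_or_lt with rfl | h
  · rw [concatAt_of_le _ _ le_rfl, hγ, sub_self]
  · exact if_neg h.not_ge

variable {X : Type*} [PseudoMetricSpace X] {A B : ℝ} {D G : Set X} {x y z : X}

theorem lipschitzOnWith_one_iff_of_le {s : Set ℝ} {γ : ℝ → X} :
    LipschitzOnWith 1 γ s ↔ ∀ a ∈ s, ∀ b ∈ s, a ≤ b → dist (γ a) (γ b) ≤ b - a := by
  rw [lipschitzOnWith_iff_dist_le_mul]
  simp only [NNReal.coe_one, one_mul]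
  refine ⟨fun h a ha b hb hab => ?_, fun h a ha b hb => ?_⟩
  · simpa [Real.dist_eq, abs_sub_comm a, abs_of_nonneg (sub_nonneg.2 hab)] using h a ha b hb
  · rcases le_total a b with hab | hba
    · simpa [Real.dist_eq, abs_sub_comm a, abs_of_nonneg (sub_nonneg.2 hab)] using h a ha b hb hab
    · simpa [Real.dist_eq, dist_comm, abs_of_nonneg (sub_nonneg.2 hba)] using h b hb a ha hba

theorem lipschitzOnWith_one_flip {ℓ : ℝ} {γ : ℝ → X} (h : LipschitzOnWith 1 γ (Icc 0 ℓ)) :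
    LipschitzOnWith 1 (fun t => γ (ℓ - t)) (Icc 0 ℓ) := by
  rw [lipschitzOnWith_one_iff_of_le] at *
  rintro a ⟨ha, -⟩ b ⟨-, hb⟩ hab
  rw [dist_comm]
  linarith [h (ℓ - b) ⟨by linarith, by linarith⟩ (ℓ - a) ⟨by linarith, by linarith⟩ (by linarith)]

theorem lipschitzOnWith_one_concatAt {a b : ℝ} {γ₁ γ₂ : ℝ → X} (ha : 0 ≤ a) (hb : 0 ≤ b)
    (h₁ : LipschitzOnWith 1 γ₁ (Icc 0 a)) (h₂ : LipschitzOnWith 1 γ₂ (Icc 0 b))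
    (hγ : γ₁ a = γ₂ 0) : LipschitzOnWith 1 (concatAt a γ₁ γ₂) (Icc 0 (a + b)) := by
  rw [lipschitzOnWith_one_iff_of_le] at *
  rintro s ⟨hs, -⟩ t ⟨-, ht⟩ hst
  rcases le_total t a with hta | hat
  · rw [concatAt_of_le _ _ (hst.trans hta), concatAt_of_le _ _ hta]
    exact h₁ s ⟨hs, hst.trans hta⟩ t ⟨hs.trans hst, hta⟩ hst
  rw [concatAt_of_ge hγ hat]
  rcases le_total s a with hsa | has
  · rw [concatAt_of_le _ _ hsa]
    have before := h₁ s ⟨hs, hsa⟩ a ⟨ha, le_rfl⟩ hsa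
    have after := h₂ 0 ⟨le_rfl, hb⟩ (t - a) ⟨by linarith, by linarith⟩ (by linarith)
    rw [hγ] at before
    linarith [dist_triangle (γ₁ s) (γ₂ 0) (γ₂ (t - a))]
  · rw [concatAt_of_ge hγ has]
    linarith [h₂ (s - a) ⟨by linarith, by linarith⟩ (t - a) ⟨by linarith, by linarith⟩
      (by linarith)]

/-- `γ` is an `A`-carrot of length `ℓ` in `D`: a `1`-Lipschitz curve on `[0, ℓ]` inside `D` with
`t ≤ A · dist(γ t, X \ D)`. The distance is taken to the complement rather than to the boundary;
the two agree on `D` in a normed space, see `infDist_frontier_eq_infDist_compl`. -/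
structure IsCarrot (A : ℝ) (D : Set X) (ℓ : ℝ) (γ : ℝ → X) : Prop where
  length_nonneg : 0 ≤ ℓ
  lipschitz : LipschitzOnWith 1 γ (Icc 0 ℓ)
  mem : ∀ t ∈ Icc 0 ℓ, γ t ∈ D
  le_mul_infDist : ∀ t ∈ Icc 0 ℓ, t ≤ A * infDist (γ t) Dᶜ

/-- Some `A`-carrot in `D` has its tip at `x` and its thick end at `z`. -/
def CarrotJoined (A : ℝ) (D : Set X) (x z : X) : Prop :=
  ∃ ℓ γ, IsCarrot A D ℓ γ ∧ γ 0 = x ∧ γ ℓ = z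

namespace IsCarrot

variable {ℓ s t : ℝ} {γ : ℝ → X}

theorem dist_le (h : IsCarrot A D ℓ γ) (hs : 0 ≤ s) (hst : s ≤ t) (ht : t ≤ ℓ) :
    dist (γ s) (γ t) ≤ t - s :=
  lipschitzOnWith_one_iff_of_le.1 h.lipschitz s ⟨hs, hst.trans ht⟩ t ⟨hs.trans hst, ht⟩ hst

theorem infDist_zero_le (h : IsCarrot A D ℓ γ) (ht : t ∈ Icc 0 ℓ) :
    infDist (γ 0) Dᶜ ≤ (1 + A) * infDist (γ t) Dᶜ := by
  have := h.dist_le le_rfl ht.1 ht.2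
  have := h.le_mul_infDist t ht
  have : infDist (γ 0) Dᶜ ≤ infDist (γ t) Dᶜ + dist (γ 0) (γ t) := infDist_le_infDist_add_dist
  linarith

theorem initial (h : IsCarrot A D ℓ γ) (ht : t ∈ Icc 0 ℓ) : IsCarrot A D t γ where
  length_nonneg := ht.1
  lipschitz := h.lipschitz.mono (Icc_subset_Icc_right ht.2)
  mem s hs := h.mem s ⟨hs.1, hs.2.trans ht.2⟩
  le_mul_infDist s hs := h.le_mul_infDist s ⟨hs.1, hs.2.trans ht.2⟩

theorem tail (h : IsCarrot A D ℓ γ) (ht : t ∈ Icc 0 ℓ) :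
    IsCarrot A D (ℓ - t) (fun s => γ (t + s)) := by
  have shift_mem {s : ℝ} (hs : s ∈ Icc 0 (ℓ - t)) : t + s ∈ Icc 0 ℓ :=
    ⟨add_nonneg ht.1 hs.1, by linarith [hs.2]⟩
  refine ⟨sub_nonneg.2 ht.2, lipschitzOnWith_one_iff_of_le.2 fun a ha b hb hab => ?_,
    fun s hs => h.mem _ (shift_mem hs), fun s hs => ?_⟩
  · linarith [h.dist_le (shift_mem ha).1 (add_le_add_right hab t) (shift_mem hb).2]
  · linarith [h.le_mul_infDist _ (shift_mem hs), ht.1]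

theorem mono_set {k : ℝ} (h : IsCarrot A D ℓ γ) (hA : 0 ≤ A) (hG : ∀ t ∈ Icc 0 ℓ, γ t ∈ G)
    (hDG : ∀ t ∈ Icc 0 ℓ, infDist (γ t) Dᶜ ≤ k * infDist (γ t) Gᶜ) :
    IsCarrot (A * k) G ℓ γ where
  length_nonneg := h.length_nonneg
  lipschitz := h.lipschitz
  mem := hG
  le_mul_infDist t ht := calc
    t ≤ A * infDist (γ t) Dᶜ := h.le_mul_infDist t ht
    _ ≤ A * (k * infDist (γ t) Gᶜ) := mul_le_mul_of_nonneg_left (hDG t ht) hA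
    _ = A * k * infDist (γ t) Gᶜ := (mul_assoc _ _ _).symm

end IsCarrot

namespace CarrotJoined

theorem mem_right (h : CarrotJoined A D x z) : z ∈ D := by
  obtain ⟨ℓ, γ, hγ, -, rfl⟩ := h
  exact hγ.mem ℓ ⟨hγ.length_nonneg, le_rfl⟩

theorem mono (h : CarrotJoined A D x z) (hAB : A ≤ B) : CarrotJoined B D x z := by
  obtain ⟨ℓ, γ, hγ, h₀, hℓ⟩ := h
  exact ⟨ℓ, γ, { hγ with
    le_mul_infDist := fun t ht =>
      (hγ.le_mul_infDist t ht).trans (mul_le_mul_of_nonneg_right hAB infDist_nonneg) }, h₀, hℓ⟩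

theorem trans (h : CarrotJoined A D x y) (h' : CarrotJoined B D y z) (hA : 0 ≤ A) (hB : 0 ≤ B) :
    CarrotJoined (A + B + A * B) D x z := by
  obtain ⟨a, γ₁, h₁, rfl, rfl⟩ := h
  obtain ⟨b, γ₂, h₂, hγ, rfl⟩ := h'
  have ha := h₁.length_nonneg
  have hb := h₂.length_nonneg
  have at_end : concatAt a γ₁ γ₂ (a + b) = γ₂ b := by
    rw [concatAt_of_ge hγ.symm (by linarith), add_sub_cancel_left]
  refine ⟨a + b, concatAt a γ₁ γ₂, ⟨by linarith,
    lipschitzOnWith_one_concatAt ha hb h₁.lipschitz h₂.lipschitz hγ.symm, ?_, ?_⟩,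
    concatAt_of_le _ _ ha, at_end⟩
  · rintro t ⟨ht, htab⟩
    rcases le_total t a with hta | hat
    · rw [concatAt_of_le _ _ hta]
      exact h₁.mem t ⟨ht, hta⟩
    · rw [concatAt_of_ge hγ.symm hat]
      exact h₂.mem _ ⟨by linarith, by linarith⟩
  · rintro t ⟨ht, htab⟩
    rcases le_total t a with hta | hat
    · rw [concatAt_of_le _ _ hta]
      refine (h₁.le_mul_infDist t ⟨ht, hta⟩).trans ?_
      gcongr
      · exact infDist_nonneg
      · nlinarith
    · rw [concatAt_of_ge hγ.symm hat]
      have hs : t - a ∈ Icc 0 b := ⟨by linarith, by linarith⟩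
      set d := infDist (γ₂ (t - a)) Dᶜ
      have junction_le : infDist (γ₁ a) Dᶜ ≤ (1 + B) * d := hγ ▸ h₂.infDist_zero_le hs
      calc t = a + (t - a) := by ring
        _ ≤ A * infDist (γ₁ a) Dᶜ + B * d :=
          add_le_add (h₁.le_mul_infDist a ⟨ha, le_rfl⟩) (h₂.le_mul_infDist _ hs)
        _ ≤ A * ((1 + B) * d) + B * d := by gcongr
        _ = (A + B + A * B) * d := by ring

theorem reverse {m : ℝ} (h : CarrotJoined A D x z) (hA : 0 ≤ A) (hm : 0 ≤ m)
    (hzx : infDist z Dᶜ ≤ m * infDist x Dᶜ) : CarrotJoined (A * m * (1 + A)) D z x := by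
  obtain ⟨ℓ, γ, hγ, rfl, rfl⟩ := h
  have flip_mem {t : ℝ} (ht : t ∈ Icc 0 ℓ) : ℓ - t ∈ Icc 0 ℓ :=
    ⟨sub_nonneg.2 ht.2, sub_le_self _ ht.1⟩
  refine ⟨ℓ, fun t => γ (ℓ - t), ⟨hγ.length_nonneg,
    lipschitzOnWith_one_flip hγ.lipschitz, fun t ht => hγ.mem _ (flip_mem ht), fun t ht => ?_⟩,
    by simp, by simp⟩
  calc t ≤ ℓ := ht.2
    _ ≤ A * infDist (γ ℓ) Dᶜ := hγ.le_mul_infDist ℓ ⟨hγ.length_nonneg, le_rfl⟩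
    _ ≤ A * (m * infDist (γ 0) Dᶜ) := by gcongr
    _ ≤ A * (m * ((1 + A) * infDist (γ (ℓ - t)) Dᶜ)) := by
      gcongr
      exact hγ.infDist_zero_le (flip_mem ht)
    _ = A * m * (1 + A) * infDist (γ (ℓ - t)) Dᶜ := by ring

end CarrotJoined

section CarrotNhd

variable {K : Set X} {w : X}

/-- The points on the `A`-carrots in `D` that lead from a point of `K` to `z`. -/
def carrotPoints (A : ℝ) (D K : Set X) (z : X) : Set X :=
  {w | ∃ ℓ γ, IsCarrot A D ℓ γ ∧ γ 0 ∈ K ∧ γ ℓ = z ∧ w ∈ γ '' Icc 0 ℓ}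

/-- The neighbourhood of `carrotPoints A D K z` that engulfs `K` inside `D`. All carrots are used,
which avoids choosing one for each point of `K`. -/
def carrotNhd (A : ℝ) (D K : Set X) (z : X) : Set X :=
  ⋃ w ∈ carrotPoints A D K z, ball w (infDist w Dᶜ / 2)

theorem CarrotJoined.left_mem_carrotPoints (h : CarrotJoined A D x z) (hx : x ∈ K) :
    x ∈ carrotPoints A D K z := by
  obtain ⟨ℓ, γ, hγ, rfl, rfl⟩ := h
  exact ⟨ℓ, γ, hγ, hx, rfl, mem_image_of_mem γ ⟨le_rfl, hγ.length_nonneg⟩⟩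

theorem CarrotJoined.right_mem_carrotPoints (h : CarrotJoined A D x z) (hx : x ∈ K) :
    z ∈ carrotPoints A D K z := by
  obtain ⟨ℓ, γ, hγ, rfl, rfl⟩ := h
  exact ⟨ℓ, γ, hγ, hx, rfl, mem_image_of_mem γ ⟨hγ.length_nonneg, le_rfl⟩⟩

theorem carrotPoints_subset : carrotPoints A D K z ⊆ D := by
  rintro _ ⟨ℓ, γ, hγ, -, -, t, ht, rfl⟩
  exact hγ.mem t ht

theorem dist_le_of_mem_carrotPoints (hw : w ∈ carrotPoints A D K z) :
    dist w z ≤ A * infDist z Dᶜ := by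
  obtain ⟨ℓ, γ, hγ, -, rfl, t, ht, rfl⟩ := hw
  linarith [hγ.dist_le ht.1 ht.2 le_rfl, hγ.le_mul_infDist ℓ ⟨hγ.length_nonneg, le_rfl⟩, ht.1]

theorem le_mul_infDist_of_mem_carrotPoints {ε : ℝ} (hK : ∀ x ∈ K, ε ≤ infDist x Dᶜ)
    (hw : w ∈ carrotPoints A D K z) : ε ≤ (1 + A) * infDist w Dᶜ := by
  obtain ⟨ℓ, γ, hγ, hγK, -, t, ht, rfl⟩ := hw
  exact (hK _ hγK).trans (hγ.infDist_zero_le ht)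

theorem isOpen_carrotNhd : IsOpen (carrotNhd A D K z) :=
  isOpen_biUnion fun _ _ => isOpen_ball

theorem carrotPoints_subset_carrotNhd (hD : IsOpen D) (hDne : Dᶜ.Nonempty) :
    carrotPoints A D K z ⊆ carrotNhd A D K z := fun w hw =>
  have infDist_pos : 0 < infDist w Dᶜ :=
    (hD.isClosed_compl.notMem_iff_infDist_pos hDne).1 (notMem_compl_iff.2 (carrotPoints_subset hw))
  mem_biUnion hw (mem_ball_self (half_pos infDist_pos))

theorem infDist_le_two_mul_infDist_of_mem_ball (hy : y ∈ ball w (infDist w Dᶜ / 2)) :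
    infDist w Dᶜ ≤ 2 * infDist y Dᶜ := by
  have : infDist w Dᶜ ≤ infDist y Dᶜ + dist w y := infDist_le_infDist_add_dist
  linarith [mem_ball'.1 hy]

theorem carrotNhd_subset : carrotNhd A D K z ⊆ D :=
  iUnion₂_subset fun _ _ =>
    (ball_subset_ball (half_le_self infDist_nonneg)).trans ball_infDist_compl_subset

theorem carrotNhd_subset_closedBall :
    carrotNhd A D K z ⊆ closedBall z ((1 + 2 * A) * infDist z Dᶜ) := by
  refine iUnion₂_subset fun w hw y hy => mem_closedBall.2 ?_
  have hwz := dist_le_of_mem_carrotPoints hw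
  have : infDist w Dᶜ ≤ infDist z Dᶜ + dist w z := infDist_le_infDist_add_dist
  linarith [mem_ball.1 hy, dist_triangle y w z, infDist_nonneg (x := w) (s := Dᶜ)]

theorem isCompact_closure_carrotNhd [ProperSpace X] : IsCompact (closure (carrotNhd A D K z)) :=
  (isCompact_closedBall z _).closure_of_subset carrotNhd_subset_closedBall

theorem closure_carrotNhd_subset (hA : 0 ≤ A) (hD : IsOpen D) (hDne : Dᶜ.Nonempty)
    (hK : IsCompact K) (hKD : K ⊆ D) : closure (carrotNhd A D K z) ⊆ D := by
  have infDist_pos (x : X) (hx : x ∈ K) : 0 < infDist x Dᶜ :=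
    (hD.isClosed_compl.notMem_iff_infDist_pos hDne).1 (notMem_compl_iff.2 (hKD hx))
  obtain ⟨ε, hε, hKε⟩ := hK.exists_forall_le' (continuous_infDist_pt Dᶜ).continuousOn infDist_pos
  have isClosed_deep : IsClosed {y | ε ≤ (1 + A) * (2 * infDist y Dᶜ)} :=
    isClosed_le continuous_const
      (continuous_const.mul (continuous_const.mul (continuous_infDist_pt Dᶜ)))
  have carrotNhd_subset_deep : carrotNhd A D K z ⊆ {y | ε ≤ (1 + A) * (2 * infDist y Dᶜ)} :=
    iUnion₂_subset fun w hw y hy => calc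
      ε ≤ (1 + A) * infDist w Dᶜ := le_mul_infDist_of_mem_carrotPoints hKε hw
      _ ≤ (1 + A) * (2 * infDist y Dᶜ) := by
        gcongr
        exact infDist_le_two_mul_infDist_of_mem_ball hy
  refine (closure_minimal carrotNhd_subset_deep isClosed_deep).trans fun y hy => ?_
  by_contra hyD
  have : ε ≤ 0 := by simpa [infDist_zero_of_mem (mem_compl hyD)] using hy
  exact hε.not_ge this

theorem infDist_compl_le_two_mul_infDist_compl_carrotNhd (hDne : Dᶜ.Nonempty)
    (hw : w ∈ carrotPoints A D K z) :
    infDist w Dᶜ ≤ 2 * infDist w (carrotNhd A D K z)ᶜ := by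
  rw [← div_le_iff₀' zero_lt_two]
  refine (le_infDist (hDne.mono (compl_subset_compl.2 carrotNhd_subset))).2 fun y hy => ?_
  by_contra! hyw
  exact hy (mem_biUnion hw (mem_ball'.2 hyw))

theorem carrotJoined_carrotNhd (hA : 0 ≤ A) (hD : IsOpen D) (hDne : Dᶜ.Nonempty)
    (hw : w ∈ carrotPoints A D K z) : CarrotJoined (A * 2) (carrotNhd A D K z) w z := by
  obtain ⟨ℓ, γ, hγ, hγK, hγz, t, ht, rfl⟩ := hw
  have tail_mem {s : ℝ} (hs : s ∈ Icc 0 (ℓ - t)) : γ (t + s) ∈ carrotPoints A D K z :=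
    ⟨ℓ, γ, hγ, hγK, hγz, mem_image_of_mem γ ⟨add_nonneg ht.1 hs.1, by linarith [hs.2]⟩⟩
  exact ⟨ℓ - t, fun s => γ (t + s), (hγ.tail ht).mono_set hA
    (fun s hs => carrotPoints_subset_carrotNhd hD hDne (tail_mem hs))
    (fun s hs => infDist_compl_le_two_mul_infDist_compl_carrotNhd hDne (tail_mem hs)),
    by simp only [add_zero], by simpa only [add_sub_cancel] using hγz⟩

end CarrotNhd

end Carrots

section NormedSpace

variable {E : Type*} [NormedAddCommGroup E] [NormedSpace ℝ E] {A c : ℝ} {D G : Set E} {x y z : E}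

theorem infDist_frontier_eq_infDist_compl (hx : x ∈ D) :
    infDist x (frontier D) = infDist x Dᶜ := by
  rcases eq_or_ne D univ with rfl | hD
  · simp
  have frontier_nonempty : (frontier D).Nonempty := nonempty_frontier_iff.2 ⟨⟨x, hx⟩, hD⟩
  apply le_antisymm
  · refine (le_infDist (nonempty_compl.2 hD)).2 fun y hy => ?_
    obtain ⟨w, hw, hwF⟩ := inter_frontier_nonempty_of_isPreconnected
      (convex_segment (𝕜 := ℝ) x y).isPreconnected
      ⟨x, left_mem_segment ℝ x y, hx⟩ ⟨y, right_mem_segment ℝ x y, hy⟩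
    have := dist_add_dist_of_mem_segment hw
    linarith [infDist_le_dist_of_mem (x := x) hwF, dist_nonneg (x := w) (y := y)]
  · rw [← infDist_closure (s := Dᶜ)]
    refine infDist_le_infDist_of_subset ?_ frontier_nonempty
    rw [frontier_eq_closure_inter_closure]
    exact inter_subset_right

theorem carrotJoined_of_dist_lt (hy : dist x y < infDist y Dᶜ) : CarrotJoined 1 D x y := by
  set ℓ := dist x y
  set γ : ℝ → E := fun t => AffineMap.lineMap x y (t / ℓ)
  have γ_length : γ ℓ = y := by
    rcases eq_or_ne ℓ 0 with h | h
    · simp [γ, h, dist_eq_zero.1 h]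
    · simp [γ, h]
  have γ_lipschitz (s t : ℝ) (hst : s ≤ t) : dist (γ s) (γ t) ≤ t - s := by
    calc dist (γ s) (γ t) = (t - s) / ℓ * ℓ := by
          rw [dist_lineMap_lineMap, dist_comm (s / ℓ), Real.dist_eq, ← sub_div,
            abs_of_nonneg (div_nonneg (sub_nonneg.2 hst) dist_nonneg)]
      _ ≤ t - s := mul_le_of_le_div₀ (sub_nonneg.2 hst) dist_nonneg le_rfl
  have dist_end {t : ℝ} (ht : t ∈ Icc 0 ℓ) : dist (γ t) y ≤ ℓ - t := by
    simpa only [γ_length] using γ_lipschitz t ℓ ht.2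
  refine ⟨ℓ, γ, ⟨dist_nonneg, lipschitzOnWith_one_iff_of_le.2 fun s _ t _ => γ_lipschitz s t,
    fun t ht => ?_, fun t ht => ?_⟩, by simp [γ], γ_length⟩
  · exact ball_infDist_compl_subset (mem_ball.2 (by linarith [dist_end ht, ht.1]))
  · have : infDist y Dᶜ ≤ infDist (γ t) Dᶜ + dist y (γ t) := infDist_le_infDist_add_dist
    linarith [dist_end ht, dist_comm y (γ t)]

/-- `IsJohnDomain` in an arbitrary normed space. As for `IsJohnDomain`, the distance to an empty
boundary is `0` (a junk value of `infDist`), so the whole space is not a John domain unless it is a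
point. -/
def IsJohn (c : ℝ) (D : Set E) : Prop :=
  IsOpen D ∧ IsConnected D ∧
    ∀ x₁ ∈ D, ∀ x₂ ∈ D, ∃ ℓ : ℝ, 0 ≤ ℓ ∧ ∃ γ : ℝ → E,
      γ 0 = x₁ ∧ γ ℓ = x₂ ∧ (∀ t ∈ Icc (0:ℝ) ℓ, γ t ∈ D) ∧
      LipschitzOnWith 1 γ (Icc 0 ℓ) ∧
      ∀ t ∈ Icc (0:ℝ) ℓ, min t (ℓ - t) / c ≤ infDist (γ t) (frontier D)

theorem IsJohn.exists_isCarrot_pair (hD : IsJohn c D) (hc : 0 < c) (hx : x ∈ D) (hy : y ∈ D) :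
    ∃ ℓ γ₁ γ₂, IsCarrot c D ℓ γ₁ ∧ IsCarrot c D ℓ γ₂ ∧ γ₁ 0 = x ∧ γ₂ 0 = y ∧ γ₁ ℓ = γ₂ ℓ := by
  obtain ⟨ℓ, hℓ, γ, h₀, h₁, hγD, hγ, hdist⟩ := hD.2.2 x hx y hy
  have min_le {t : ℝ} (ht : t ∈ Icc 0 ℓ) : min t (ℓ - t) ≤ c * infDist (γ t) Dᶜ := by
    rw [← infDist_frontier_eq_infDist_compl (hγD t ht), mul_comm]
    exact (div_le_iff₀ hc).1 (hdist t ht)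
  have first_half {t : ℝ} (ht : t ∈ Icc 0 (ℓ / 2)) : t ∈ Icc 0 ℓ := ⟨ht.1, by linarith [ht.2]⟩
  have second_half {t : ℝ} (ht : t ∈ Icc 0 (ℓ / 2)) : ℓ - t ∈ Icc 0 ℓ :=
    ⟨by linarith [ht.2], by linarith [ht.1]⟩
  refine ⟨ℓ / 2, γ, fun t => γ (ℓ - t),
    ⟨by positivity, hγ.mono fun t ht => first_half ht, fun t ht => hγD t (first_half ht),
      fun t ht => ?_⟩,
    ⟨by positivity, (lipschitzOnWith_one_flip hγ).mono fun t ht => first_half ht,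
      fun t ht => hγD _ (second_half ht), fun t ht => ?_⟩, h₀, by simpa using h₁, ?_⟩
  · simpa only [min_eq_left (show t ≤ ℓ - t by linarith [ht.2])] using min_le (first_half ht)
  · have := min_le (second_half ht)
    rwa [sub_sub_cancel, min_eq_right (by linarith [ht.2])] at this
  · simp only [sub_half]

theorem IsJohn.exists_carrotJoined_pair (hD : IsJohn c D) (hc : 0 < c) (hx : x ∈ D) (hy : y ∈ D) :
    ∃ z, CarrotJoined c D x z ∧ CarrotJoined c D y z := by
  obtain ⟨ℓ, γ₁, γ₂, h₁, h₂, rfl, rfl, hℓ⟩ := hD.exists_isCarrot_pair hc hx hy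
  exact ⟨γ₁ ℓ, ⟨ℓ, γ₁, h₁, rfl, rfl⟩, ⟨ℓ, γ₂, h₂, rfl, hℓ.symm⟩⟩

theorem IsJohn.exists_carrotJoined_of_two_mul_le_dist (hD : IsJohn c D) (hc : 0 < c) (hx : x ∈ D)
    (hy : y ∈ D) {R : ℝ} (hR : 0 ≤ R) (hxy : 2 * R ≤ dist x y) :
    ∃ p, CarrotJoined c D x p ∧ dist x p ≤ R ∧ R ≤ c * infDist p Dᶜ := by
  obtain ⟨ℓ, γ₁, γ₂, h₁, h₂, rfl, rfl, hℓ⟩ := hD.exists_isCarrot_pair hc hx hy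
  have hRℓ : R ≤ ℓ := by
    have first := h₁.dist_le le_rfl h₁.length_nonneg le_rfl
    have second := h₂.dist_le le_rfl h₂.length_nonneg le_rfl
    rw [← hℓ] at second
    linarith [dist_triangle_right (γ₁ 0) (γ₂ 0) (γ₁ ℓ)]
  refine ⟨γ₁ R, ⟨R, γ₁, h₁.initial ⟨hR, hRℓ⟩, rfl, rfl⟩, ?_, h₁.le_mul_infDist R ⟨hR, hRℓ⟩⟩
  simpa only [sub_zero] using h₁.dist_le le_rfl hR hRℓ

theorem IsJohn.ne_univ [Nontrivial E] (hD : IsJohn c D) (hc : 0 < c) : D ≠ univ := by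
  rintro rfl
  obtain ⟨x, y, hxy⟩ := exists_pair_ne E
  obtain ⟨ℓ, γ₁, γ₂, h₁, -, rfl, rfl, hℓ⟩ := hD.exists_isCarrot_pair hc (mem_univ x) (mem_univ y)
  have ℓ_nonpos : ℓ ≤ 0 := by simpa using h₁.le_mul_infDist ℓ ⟨h₁.length_nonneg, le_rfl⟩
  rw [ℓ_nonpos.antisymm h₁.length_nonneg] at hℓ
  exact hxy hℓ

theorem isJohn_of_forall_carrotJoined {B : ℝ} (hB : 0 < B) (hG : IsOpen G) (hz : z ∈ G)
    (h : ∀ y ∈ G, CarrotJoined B G y z) : IsJohn B G := by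
  refine ⟨hG, ⟨⟨z, hz⟩, isPreconnected_of_forall z fun y hy => ?_⟩, fun x₁ hx₁ x₂ hx₂ => ?_⟩
  · obtain ⟨ℓ, γ, hγ, rfl, rfl⟩ := h y hy
    exact ⟨γ '' Icc 0 ℓ, image_subset_iff.2 hγ.mem, mem_image_of_mem γ ⟨hγ.length_nonneg, le_rfl⟩,
      mem_image_of_mem γ ⟨le_rfl, hγ.length_nonneg⟩,
      isPreconnected_Icc.image γ hγ.lipschitz.continuousOn⟩
  obtain ⟨a, γ₁, h₁, rfl, hγ₁⟩ := h x₁ hx₁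
  obtain ⟨b, γ₂, h₂, rfl, hγ₂⟩ := h x₂ hx₂
  have ha := h₁.length_nonneg
  have hb := h₂.length_nonneg
  let σ := fun t => γ₂ (b - t)
  have hγ : γ₁ a = σ 0 := by simp only [σ, sub_zero, hγ₁, hγ₂]
  have on_curve {t : ℝ} (ht : t ∈ Icc 0 (a + b)) :
      concatAt a γ₁ σ t ∈ G ∧ min t (a + b - t) ≤ B * infDist (concatAt a γ₁ σ t) Gᶜ := by
    rcases le_total t a with hta | hat
    · rw [concatAt_of_le _ _ hta]
      exact ⟨h₁.mem t ⟨ht.1, hta⟩, min_le_of_left_le (h₁.le_mul_infDist t ⟨ht.1, hta⟩)⟩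
    · have hs : b - (t - a) ∈ Icc 0 b := ⟨by linarith [ht.2], by linarith⟩
      rw [concatAt_of_ge hγ hat]
      exact ⟨h₂.mem _ hs, min_le_of_right_le (by linarith [h₂.le_mul_infDist _ hs])⟩
  refine ⟨a + b, add_nonneg ha hb, concatAt a γ₁ σ, concatAt_of_le _ _ ha, ?_,
    fun t ht => (on_curve ht).1, lipschitzOnWith_one_concatAt ha hb h₁.lipschitz
      (lipschitzOnWith_one_flip h₂.lipschitz) hγ, fun t ht => ?_⟩
  · rw [concatAt_of_ge hγ (le_add_of_nonneg_right hb)]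
    simp only [σ, add_sub_cancel_left, sub_self]
  · rw [div_le_iff₀ hB, mul_comm, infDist_frontier_eq_infDist_compl (on_curve ht).1]
    exact (on_curve ht).2

theorem IsJohn.exists_center_of_finset (hD : IsJohn c D) (hc : 0 < c) (F : Finset E)
    (hF : ↑F ⊆ D) : ∃ z ∈ D, ∀ f ∈ F, CarrotJoined ((1 + c) ^ F.card - 1) D f z := by
  classical
  induction F using Finset.induction_on with
  | empty =>
    obtain ⟨z, hz⟩ := hD.2.1.nonempty
    exact ⟨z, hz, by simp⟩
  | insert f F hf ih =>
    rw [Finset.coe_insert, insert_subset_iff] at hF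
    obtain ⟨z, hz, hFz⟩ := ih hF.2
    obtain ⟨w, hzw, hfw⟩ := hD.exists_carrotJoined_pair hc hz hF.1
    have one_le_pow : 1 ≤ (1 + c) ^ F.card := one_le_pow₀ (by linarith)
    rw [Finset.card_insert_of_notMem hf, pow_succ]
    refine ⟨w, hzw.mem_right, fun g hg => ?_⟩
    rcases Finset.mem_insert.1 hg with rfl | hg
    · exact hfw.mono (by nlinarith)
    · exact ((hFz g hg).trans hzw (by linarith) hc.le).mono (by linarith)

theorem IsJohn.exists_center_of_bddAbove (hD : IsJohn c D) (hc : 0 < c)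
    (hb : BddAbove ((infDist · Dᶜ) '' D)) :
    ∃ z ∈ D, ∀ x ∈ D, CarrotJoined (c + c * 2 * (1 + c) + c * (c * 2 * (1 + c))) D x z := by
  obtain ⟨z, hz, hmax⟩ :=
    exists_forall_le_two_mul_of_bddAbove (f := (infDist · Dᶜ)) hD.2.1.nonempty
      (fun x _ => infDist_nonneg (x := x)) hb
  refine ⟨z, hz, fun x hx => ?_⟩
  obtain ⟨w, hxw, hzw⟩ := hD.exists_carrotJoined_pair hc hx hz
  exact hxw.trans (hzw.reverse hc.le zero_le_two (hmax w hxw.mem_right)) hc.le (by positivity)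

theorem IsJohn.exists_carrotJoined_deep_of_not_bddAbove (hD : IsJohn c D) (hc : 0 < c)
    (hb : ¬BddAbove ((infDist · Dᶜ) '' D)) {R : ℝ} (hR : 0 ≤ R) (hx : x ∈ D)
    (hxR : x ∈ closedBall 0 R) :
    ∃ p ∈ closedBall (0 : E) (R * 2), CarrotJoined c D x p ∧ R ≤ c * infDist p Dᶜ := by
  obtain ⟨_, ⟨y, hy, rfl⟩, hdeep⟩ := not_bddAbove_iff.1 hb (infDist 0 Dᶜ + 3 * R)
  rw [mem_closedBall] at hxR
  have hxy : 2 * R ≤ dist x y := by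
    have : infDist y Dᶜ ≤ infDist 0 Dᶜ + dist y 0 := infDist_le_infDist_add_dist
    linarith [dist_triangle_left y 0 x]
  obtain ⟨p, hxp, hdist, hRp⟩ := hD.exists_carrotJoined_of_two_mul_le_dist hc hx hy hR hxy
  exact ⟨p, mem_closedBall.2 (by linarith [dist_triangle_left p 0 x]), hxp, hRp⟩

theorem exists_center_of_not_bddAbove (E : Type*) [NormedAddCommGroup E] [NormedSpace ℝ E]
    [ProperSpace E] (hc : 0 < c) :
    ∃ A : ℝ, 0 ≤ A ∧ ∀ D : Set E, IsJohn c D → ¬BddAbove ((infDist · Dᶜ) '' D) →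
      ∀ K ⊆ D, IsBounded K → ∃ z ∈ D, ∀ x ∈ K, CarrotJoined A D x z := by
  obtain ⟨N, hN⟩ :=
    exists_finset_net_card_le_of_subset_closedBall E 2 (ε := (2 * c)⁻¹) (by positivity)
  set M := (1 + c) ^ N - 1
  have hM : 0 ≤ M := sub_nonneg.2 (one_le_pow₀ (by linarith))
  refine ⟨c + 1 + c * 1 + M + (c + 1 + c * 1) * M, by positivity, fun D hD hb K hKD hK => ?_⟩
  obtain ⟨R, hR, hKR⟩ := hK.subset_closedBall_lt 0 0
  have joined_deep : ∀ x ∈ K, ∃ p ∈ closedBall (0 : E) (R * 2),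
      CarrotJoined c D x p ∧ R ≤ c * infDist p Dᶜ := fun x hx =>
    hD.exists_carrotJoined_deep_of_not_bddAbove hc hb hR.le (hKD hx) (hKR hx)
  choose! p p_mem hxp p_deep using joined_deep
  obtain ⟨F, hFK, hFcard, hF⟩ := hN R hR (p '' K) (image_subset_iff.2 p_mem)
  have F_subset : ↑F ⊆ D := hFK.trans (image_subset_iff.2 fun x hx => (hxp x hx).mem_right)
  obtain ⟨z, hz, hFz⟩ := hD.exists_center_of_finset hc F F_subset
  have hFM : (1 + c) ^ F.card - 1 ≤ M :=
    sub_le_sub_right (pow_le_pow_right₀ (by linarith) hFcard) 1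
  refine ⟨z, hz, fun x hx => ?_⟩
  obtain ⟨f, hf, hpf⟩ := hF _ (mem_image_of_mem p hx)
  have f_deep : R / c ≤ infDist f Dᶜ := by
    obtain ⟨x', hx', rfl⟩ := hFK hf
    exact (div_le_iff₀' hc).2 (p_deep x' hx')
  have p_joined : CarrotJoined 1 D (p x) f := by
    refine carrotJoined_of_dist_lt ?_
    calc dist (p x) f ≤ R * (2 * c)⁻¹ := hpf
      _ = R / c / 2 := by field_simp
      _ < R / c := half_lt_self (div_pos hR hc)
      _ ≤ infDist f Dᶜ := f_deep
  exact ((hxp x hx).trans p_joined hc.le zero_le_one).trans ((hFz f hf).mono hFM)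
    (by positivity) hM

theorem exists_center_of_isBounded (E : Type*) [NormedAddCommGroup E] [NormedSpace ℝ E]
    [ProperSpace E] (hc : 0 < c) :
    ∃ A : ℝ, 0 ≤ A ∧ ∀ D : Set E, IsJohn c D →
      ∀ K ⊆ D, IsBounded K → ∃ z ∈ D, ∀ x ∈ K, CarrotJoined A D x z := by
  obtain ⟨A, hA, hcenter⟩ := exists_center_of_not_bddAbove E hc
  refine ⟨max (c + c * 2 * (1 + c) + c * (c * 2 * (1 + c))) A, le_max_of_le_right hA,
    fun D hD K hKD hK => ?_⟩
  by_cases hb : BddAbove ((infDist · Dᶜ) '' D)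
  · obtain ⟨z, hz, hDz⟩ := hD.exists_center_of_bddAbove hc hb
    exact ⟨z, hz, fun x hx => (hDz x (hKD hx)).mono (le_max_left _ _)⟩
  · obtain ⟨z, hz, hKz⟩ := hcenter D hD hb K hKD hK
    exact ⟨z, hz, fun x hx => (hKz x hx).mono (le_max_right _ _)⟩

theorem isJohn_carrotNhd {K : Set E} (hA : 0 ≤ A) (hD : IsOpen D) (hDne : Dᶜ.Nonempty)
    (hz : z ∈ carrotPoints A D K z) : IsJohn (1 + A * 2 + 1 * (A * 2)) (carrotNhd A D K z) := by
  refine isJohn_of_forall_carrotJoined (by positivity) isOpen_carrotNhd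
    (carrotPoints_subset_carrotNhd hD hDne hz) fun y hy => ?_
  obtain ⟨w, hw, hyw⟩ := mem_iUnion₂.1 hy
  have y_joined : CarrotJoined 1 (carrotNhd A D K z) y w := carrotJoined_of_dist_lt <| by
    linarith [mem_ball.1 hyw, infDist_compl_le_two_mul_infDist_compl_carrotNhd hDne hw]
  exact y_joined.trans (carrotJoined_carrotNhd hA hD hDne hw) zero_le_one (by positivity)

theorem exists_isJohn_engulfing (E : Type*) [NormedAddCommGroup E] [NormedSpace ℝ E] [ProperSpace E]
    [Nontrivial E] (hc : 0 < c) :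
    ∃ B : ℝ, 1 ≤ B ∧ ∀ D : Set E, IsJohn c D → ∀ K ⊆ D, IsCompact K →
      ∃ G, K ⊆ G ∧ closure G ⊆ D ∧ IsCompact (closure G) ∧ IsJohn B G := by
  obtain ⟨A, hA, hcenter⟩ := exists_center_of_isBounded E hc
  refine ⟨1 + A * 2 + 1 * (A * 2), by linarith, fun D hD K hKD hK => ?_⟩
  have hDne : Dᶜ.Nonempty := nonempty_compl.2 (hD.ne_univ hc)
  -- Adjoining a point of `D` takes care of the empty `K`, which reaches no centre.
  obtain ⟨x₀, hx₀⟩ := hD.2.1.nonempty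
  have insert_subset : insert x₀ K ⊆ D := insert_subset hx₀ hKD
  obtain ⟨z, -, hz⟩ := hcenter D hD (insert x₀ K) insert_subset (hK.insert x₀).isBounded
  refine ⟨carrotNhd A D (insert x₀ K) z, fun x hx => ?_,
    closure_carrotNhd_subset hA hD.1 hDne (hK.insert x₀) insert_subset,
    isCompact_closure_carrotNhd, isJohn_carrotNhd hA hD.1 hDne ?_⟩
  · exact carrotPoints_subset_carrotNhd hD.1 hDne
      ((hz x (mem_insert_of_mem x₀ hx)).left_mem_carrotPoints (mem_insert_of_mem x₀ hx))
  · exact (hz x₀ (mem_insert x₀ K)).right_mem_carrotPoints (mem_insert x₀ K)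

end NormedSpace

theorem statement16_general (E : Type*) [NormedAddCommGroup E] [NormedSpace ℝ E]
    [FiniteDimensional ℝ E] [Nontrivial E] {c : ℝ} (hc : 0 < c) :
    ∃ c₁ : ℝ, 1 ≤ c₁ ∧
      ∀ D : Set E, IsJohn c D →
        ∃ Dseq : ℕ → Set E, (⋃ i, Dseq i) = D ∧
          (∀ i, closure (Dseq i) ⊆ Dseq (i + 1) ∧ IsCompact (closure (Dseq i))) ∧
          ∀ i, IsJohn c₁ (Dseq i) := by
  have : ProperSpace E := FiniteDimensional.proper_real E
  obtain ⟨c₁, one_le, engulf⟩ := exists_isJohn_engulfing E hc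
  exact ⟨c₁, one_le, fun D hD =>
    exists_exhaustion_of_engulfing (isSigmaCompact_of_isOpen hD.1) (engulf D hD)⟩

/-- Engulfing property: a `c`-John domain `D ⊆ ℝⁿ`, `n ≥ 2`, can be
written as the union of domains `D₁, D₂, …` such that the closure of each `Dᵢ` is a
compact subset of `Dᵢ₊₁` and each `Dᵢ` is a `c₁`-John domain with `c₁ = c₁(c,n)`. -/
theorem statement16 (n : ℕ) (hn : 2 ≤ n) (c : ℝ) (hc : 1 ≤ c) :
    ∃ c₁ : ℝ, 1 ≤ c₁ ∧
      ∀ D : Set (Eucl n), IsJohnDomain n c D →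
        ∃ Dseq : ℕ → Set (Eucl n), (⋃ i, Dseq i) = D ∧
          (∀ i, closure (Dseq i) ⊆ Dseq (i + 1) ∧ IsCompact (closure (Dseq i))) ∧
          ∀ i, IsJohnDomain n c₁ (Dseq i) := by
  have : Nonempty (Fin n) := ⟨⟨0, by omega⟩⟩
  exact statement16_general (Eucl n) (by linarith)
end

section
/- Let D be a c-John domain in ℝⁿ, n ≥ 2 (bounded or unbounded), let τ, δ ∈ (0,1), 1 ≤ p < n/δ, and set q = np/(n−δp). Then there is a constant C = C(δ, τ, p, n, c) such that for every measurable u: D → ℝ with |u|_{W^{δ,p}_τ(D)} < ∞ there exists a real number a_u with (∫_D |u(x) − a_u|^q dx)^{1/q} ≤ C |u|_{W^{δ,p}_τ(D)}; moreover, if D is unbounded and u has compact support in D, then a_u can be taken to be 0. -/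
open MeasureTheory Metric Set
open scoped ENNReal NNReal BigOperators

/-!
Let `g x` be the inner integral of the seminorm, so that `∫_D g = |u|^p`. Off a set of small
measure, controlled by the weak-type inequality for the maximal function, `∫_{B(x, t)} g` grows at
most like `K * min t ρ ^ n`. Joining two such points by a John curve and comparing the averages of
`u` on a chain of balls of radii proportional to the distance from the endpoints gives a sum of
geometric type in both ranges `t ≤ ρ` and `t ≥ ρ`. Hence, off the small set, `u` oscillates by
at most a given `r`: this is a weak-type estimate with exponent `q`.

Maz'ya's truncation upgrades it to a strong estimate. The dyadic truncations of
`max (u - a) 0` and `max (a - u) 0` have seminorms whose `p`-th powers add up to at most that of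
`u`, and if `a` is a median then each truncation is minimal on half of `D`, which turns the
oscillation estimate into a bound for the superlevel sets. If `D` has infinite measure and the
support of `u` has finite measure, `0` is a median.
-/

section LAverage

variable {α : Type*} [MeasurableSpace α] {μ ν : Measure α}

theorem rpow_laverage_le_laverage_rpow {f : α → ℝ≥0∞} (hf : AEMeasurable f μ) {p : ℝ}
    (hp : 1 ≤ p) : (⨍⁻ x, f x ∂μ) ^ p ≤ ⨍⁻ x, f x ^ p ∂μ := by
  have hp₀ : 0 < p := one_pos.trans_le hp
  by_cases hμ : IsFiniteMeasure μ ∧ NeZero μ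
  · obtain ⟨_, _⟩ := hμ
    have h := eLpNorm'_le_eLpNorm'_of_exponent_le one_pos hp ((μ univ)⁻¹ • μ)
      (hf.smul_measure _).aestronglyMeasurable
    simpa only [laverage_eq', eLpNorm'_eq_lintegral_enorm, enorm_eq_self, ENNReal.rpow_one,
      one_div, inv_one, ENNReal.le_rpow_inv_iff hp₀] using h
  · have hμ' : μ univ = ⊤ ∨ μ = 0 := by
      simpa only [isFiniteMeasure_iff, neZero_iff, not_and_or, not_lt, top_le_iff, not_not] using hμ
    rcases hμ' with h | rfl
    · simp [laverage_eq, h, hp₀]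
    · simp [hp₀]

theorem edist_le_laverage_edist_add [IsFiniteMeasure μ] [NeZero μ] {β : Type*}
    [PseudoEMetricSpace β] [MeasurableSpace β] [OpensMeasurableSpace β] {u : α → β}
    (hu : Measurable u) (a b : β) :
    edist a b ≤ ⨍⁻ y, edist a (u y) ∂μ + ⨍⁻ y, edist b (u y) ∂μ := by
  have ha : Measurable fun y ↦ edist a (u y) := measurable_edist_right.comp hu
  rw [← laverage_const μ (edist a b), laverage_eq', laverage_eq', laverage_eq',
    ← lintegral_add_left ha]
  exact lintegral_mono fun y ↦ edist_triangle_right a b (u y)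

theorem laverage_edist_le_add [IsFiniteMeasure μ] [NeZero μ] [IsFiniteMeasure ν] [NeZero ν]
    {β : Type*} [PseudoEMetricSpace β] [MeasurableSpace β] [OpensMeasurableSpace β] {u : α → β}
    (hu : Measurable u) (a : β) :
    ⨍⁻ z, edist a (u z) ∂μ ≤
      ⨍⁻ y, edist a (u y) ∂ν + ⨍⁻ z, ⨍⁻ y, edist (u z) (u y) ∂ν ∂μ := by
  calc ⨍⁻ z, edist a (u z) ∂μ
      ≤ ⨍⁻ z, (⨍⁻ y, edist a (u y) ∂ν + ⨍⁻ y, edist (u z) (u y) ∂ν) ∂μ :=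
        lintegral_mono fun z ↦ edist_le_laverage_edist_add hu a (u z)
    _ = ⨍⁻ y, edist a (u y) ∂ν + ⨍⁻ z, ⨍⁻ y, edist (u z) (u y) ∂ν ∂μ := by
        rw [laverage_eq' μ, lintegral_add_left measurable_const, ← laverage_eq', laverage_const,
          ← laverage_eq']

end LAverage

theorem tsum_rpow_le_rpow_tsum {ι : Type*} (f : ι → ℝ≥0∞) {p : ℝ} (hp : 1 ≤ p) :
    ∑' i, f i ^ p ≤ (∑' i, f i) ^ p := by
  classical
  have hfin (s : Finset ι) : ∑ i ∈ s, f i ^ p ≤ (∑ i ∈ s, f i) ^ p := by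
    induction s using Finset.induction_on with
    | empty => simp
    | insert a s ha ih =>
      rw [Finset.sum_insert ha, Finset.sum_insert ha]
      exact (add_le_add_right ih _).trans (ENNReal.add_rpow_le_rpow_add _ _ hp)
  rw [ENNReal.tsum_eq_iSup_sum]
  exact iSup_le fun s ↦ (hfin s).trans <|
    ENNReal.rpow_le_rpow (ENNReal.sum_le_tsum s) (zero_le_one.trans hp)

section Maximal

variable {E : Type*} [NormedAddCommGroup E] [NormedSpace ℝ E] [FiniteDimensional ℝ E]
  [MeasurableSpace E] [BorelSpace E] (μ : Measure E) [μ.IsAddHaarMeasure]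

open Module

theorem bddAbove_setOf_addHaar_closedBall_le [Nontrivial E] {M : ℝ≥0∞} (hM : M ≠ ⊤) :
    BddAbove {r : ℝ | ∃ x, μ (closedBall x r) ≤ M} := by
  set ω := μ (ball (0 : E) 1)
  have hω : ω ≠ 0 := (measure_ball_pos μ _ one_pos).ne'
  refine ⟨max 1 (M / ω).toReal, fun r ⟨x, hr⟩ ↦ ?_⟩
  rcases le_total r 1 with h | h
  · exact le_max_of_le_left h
  rw [Measure.addHaar_closedBall μ _ (zero_le_one.trans h)] at hr
  have hpow : ENNReal.ofReal (r ^ finrank ℝ E) ≤ M / ω :=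
    (ENNReal.le_div_iff_mul_le (.inl hω) (.inl measure_ball_lt_top.ne)).2 hr
  exact le_max_of_le_right <| (le_self_pow₀ h finrank_pos.ne').trans <|
    (ENNReal.ofReal_le_iff_le_toReal (ENNReal.div_ne_top hM hω)).1 hpow

theorem addHaar_closedBall_const_mul (x : E) {s r : ℝ} (hs : 0 ≤ s) (hr : 0 ≤ r) :
    μ (closedBall x (s * r)) = ENNReal.ofReal s ^ finrank ℝ E * μ (closedBall x r) := by
  rw [Measure.addHaar_closedBall μ _ (mul_nonneg hs hr), Measure.addHaar_closedBall μ _ hr,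
    mul_pow, ENNReal.ofReal_mul (pow_nonneg hs _), ENNReal.ofReal_pow hs, mul_assoc]

theorem mul_measure_setOf_lt_setLIntegral_closedBall_le [Nontrivial E] (f : E → ℝ≥0∞) (K : ℝ≥0∞) :
    K * μ {x | ∃ r > 0, K * μ (closedBall x r) < ∫⁻ y in closedBall x r, f y ∂μ} ≤
      5 ^ finrank ℝ E * ∫⁻ y, f y ∂μ := by
  rcases eq_or_ne K 0 with rfl | hK
  · simp
  rcases eq_or_ne (∫⁻ y, f y ∂μ) ⊤ with hf | hf
  · simp [hf]
  set S := {x | ∃ r > 0, K * μ (closedBall x r) < ∫⁻ y in closedBall x r, f y ∂μ}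
  choose! r hr₀ hr using show ∀ x ∈ S, _ from fun x hx ↦ hx
  obtain ⟨R, hR⟩ := bddAbove_setOf_addHaar_closedBall_le μ (ENNReal.div_ne_top hf hK)
  have hrR (x) (hx : x ∈ S) : r x ≤ R := hR ⟨x, by
    rw [ENNReal.le_div_iff_mul_le (.inl hK) (.inr hf), mul_comm]
    exact (hr x hx).le.trans (setLIntegral_le_lintegral _ _)⟩
  obtain ⟨v, hvS, hdisj, hcover⟩ :=
    Vitali.exists_disjoint_subfamily_covering_enlargement_closedBall S id r R hrR 5 (by norm_num)
  have hv : v.Countable := hdisj.countable_of_nonempty_interior fun x hx ↦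
    ⟨x, ball_subset_interior_closedBall (mem_ball_self (hr₀ x (hvS hx)))⟩
  have hS : S ⊆ ⋃ b ∈ v, closedBall b (5 * r b) := fun x hx ↦ by
    obtain ⟨b, hb, hsub⟩ := hcover x hx
    exact mem_biUnion hb (hsub (mem_closedBall_self (hr₀ x hx).le))
  calc K * μ S ≤ K * ∑' b : v, μ (closedBall (b : E) (5 * r b)) := by
        gcongr
        exact (measure_mono hS).trans (measure_biUnion_le _ hv _)
    _ = 5 ^ finrank ℝ E * ∑' b : v, K * μ (closedBall (b : E) (r b)) := by
        simp_rw [← ENNReal.tsum_mul_left]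
        refine tsum_congr fun b ↦ ?_
        rw [addHaar_closedBall_const_mul μ _ (by norm_num) (hr₀ b (hvS b.2)).le, mul_left_comm]
        norm_num
    _ ≤ 5 ^ finrank ℝ E * ∑' b : v, ∫⁻ y in closedBall (b : E) (r b), f y ∂μ := by
        gcongr with b
        exact (hr b (hvS b.2)).le
    _ = 5 ^ finrank ℝ E * ∫⁻ y in ⋃ b ∈ v, closedBall b (r b), f y ∂μ :=
        congrArg _ (lintegral_biUnion hv (fun _ _ ↦ measurableSet_closedBall) hdisj f).symm
    _ ≤ 5 ^ finrank ℝ E * ∫⁻ y, f y ∂μ := mul_le_mul_right (setLIntegral_le_lintegral _ _) _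

end Maximal

theorem ball_infDist_frontier_subset {E : Type*} [NormedAddCommGroup E] [NormedSpace ℝ E]
    [FiniteDimensional ℝ E] {s : Set E} {x : E} (hx : x ∈ s) :
    ball x (infDist x (frontier s)) ⊆ s := by
  rcases eq_or_ne s univ with rfl | hs
  · exact subset_univ _
  obtain ⟨y, hy, hxy⟩ := exists_mem_frontier_infDist_compl_eq_dist hx hs
  exact (ball_subset_ball (hxy ▸ infDist_le_dist_of_mem hy)).trans ball_infDist_compl_subset

section Median

variable {α : Type*} [MeasurableSpace α] {μ : Measure α} {u : α → ℝ} {a : ℝ}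

/-- `a` is a median of `u`: every sublevel set above `a` and every superlevel set below `a` carries
at least half of `μ`. The one-sided form, with a multiplication instead of a division by two,
stays meaningful when `μ` is infinite. -/
def IsMedian (μ : Measure α) (u : α → ℝ) (a : ℝ) : Prop :=
  (∀ t > a, μ univ ≤ 2 * μ {x | u x ≤ t}) ∧ ∀ t < a, μ univ ≤ 2 * μ {x | t ≤ u x}

theorem le_two_mul_measure_or_of_union_eq_univ {s t : Set α} (h : s ∪ t = univ) :
    μ univ ≤ 2 * μ s ∨ μ univ ≤ 2 * μ t := by
  rw [← h]
  rcases le_total (μ s) (μ t) with hst | hst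
  · exact .inr ((measure_union_le s t).trans (by rw [two_mul]; gcongr))
  · exact .inl ((measure_union_le s t).trans (by rw [two_mul]; gcongr))

theorem exists_isMedian {B : Set α} (hB : 2 * μ B < μ univ) {M : ℝ} (hM : ∀ x ∉ B, |u x| ≤ M) :
    ∃ a, IsMedian μ u a := by
  set S := {t | μ univ ≤ 2 * μ {x | u x ≤ t}}
  have hup {t t' : ℝ} (ht : t ∈ S) (htt' : t ≤ t') : t' ∈ S :=
    le_trans ht (mul_le_mul_right (measure_mono fun x hx ↦ le_trans hx htt') 2)
  have hMS : M ∈ S := by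
    refine (le_two_mul_measure_or_of_union_eq_univ (eq_univ_of_forall fun x ↦ ?_)).resolve_right
      hB.not_ge
    exact or_iff_not_imp_right.2 fun hx ↦ (abs_le.1 (hM x hx)).2
  have hbdd : ∀ t ∈ S, -M ≤ t := fun t ht ↦ by
    by_contra! htM
    refine hB.not_ge (le_trans (show μ univ ≤ _ from ht) ?_)
    gcongr
    intro x hx
    by_contra hxB
    exact ((abs_le.1 (hM x hxB)).1.trans hx).not_gt htM
  refine ⟨sInf S, fun t ht ↦ ?_, fun t ht ↦ ?_⟩
  · obtain ⟨t', ht', htt'⟩ := exists_lt_of_csInf_lt ⟨M, hMS⟩ ht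
    exact hup ht' htt'.le
  · have htS : t ∉ S := fun htS ↦ (csInf_le ⟨-M, hbdd⟩ htS).not_gt ht
    exact (le_two_mul_measure_or_of_union_eq_univ
      (eq_univ_of_forall fun x ↦ le_total (u x) t)).resolve_left htS

theorem isMedian_zero (hμ : μ univ = ⊤) (hu : μ (Function.support u) ≠ ⊤) : IsMedian μ u 0 := by
  have hzero : μ {x | u x = 0} = ⊤ := by
    by_contra h
    refine (measure_union_lt_top hu.lt_top (Ne.lt_top h)).ne (hμ ▸ congrArg μ ?_)
    exact eq_univ_of_forall fun x ↦ (em (u x = 0)).symm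
  have htop {s : Set α} (hs : {x | u x = 0} ⊆ s) : μ univ ≤ 2 * μ s := by
    rw [measure_mono_top hs hzero, ENNReal.mul_top two_ne_zero]
    exact le_top
  exact ⟨fun t ht ↦ htop fun x hx ↦ (hx.le.trans ht.le : u x ≤ t),
    fun t ht ↦ htop fun x hx ↦ (ht.le.trans hx.ge : t ≤ u x)⟩

theorem IsMedian.neg (h : IsMedian μ u a) : IsMedian μ (-u) (-a) := by
  refine ⟨fun t ht ↦ ?_, fun t ht ↦ ?_⟩
  · simpa only [Pi.neg_apply, neg_le] using h.2 (-t) (by linarith)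
  · simpa only [Pi.neg_apply, le_neg] using h.1 (-t) (by linarith)

theorem IsMedian.measure_univ_le_max_sub (h : IsMedian μ u a) {t : ℝ} (ht : 0 < t) :
    μ univ ≤ 2 * μ {x | max (u x - a) 0 ≤ t} := by
  simpa only [max_le_iff, ht.le, and_true, sub_le_iff_le_add] using h.1 (t + a) (by linarith)

end Median

section Layers

variable {α : Type*} [MeasurableSpace α] {μ : Measure α}

theorem measure_le_two_mul_of_abs_sub_le {f : α → ℝ} {B s t : Set α} {r : ℝ}
    (hB : ∀ x ∉ B, ∀ y ∉ B, |f x - f y| ≤ r) (hs : μ univ ≤ 2 * μ s)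
    (hst : ∀ x ∈ s, ∀ y ∈ t, r < |f x - f y|) : μ t ≤ 2 * μ B := by
  by_cases hsB : s ⊆ B
  · calc μ t ≤ μ univ := measure_mono (subset_univ t)
      _ ≤ 2 * μ s := hs
      _ ≤ 2 * μ B := mul_le_mul_right (measure_mono hsB) 2
  · obtain ⟨x, hxs, hxB⟩ := not_subset.1 hsB
    have htB : t ⊆ B := fun y hy ↦ by_contra fun hyB ↦ (hst x hxs y hy).not_ge (hB x hxB y hyB)
    exact (measure_mono htB).trans (le_mul_of_one_le_left' one_le_two)

theorem lintegral_rpow_le_tsum_zpow_mul_measure {w : α → ℝ} (hw : Measurable w) (hw₀ : 0 ≤ w)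
    {q : ℝ} (hq : 0 < q) :
    ∫⁻ x, ENNReal.ofReal (w x ^ q) ∂μ ≤
      ∑' k : ℤ, ENNReal.ofReal (((2 : ℝ) ^ (k + 1)) ^ q) * μ {x | 2 ^ k ≤ w x} := by
  have hmeas (k : ℤ) : MeasurableSet {x | (2 : ℝ) ^ k ≤ w x} := measurableSet_le measurable_const hw
  calc ∫⁻ x, ENNReal.ofReal (w x ^ q) ∂μ
      ≤ ∫⁻ x, ∑' k : ℤ, {x | (2 : ℝ) ^ k ≤ w x}.indicator
          (fun _ ↦ ENNReal.ofReal (((2 : ℝ) ^ (k + 1)) ^ q)) x ∂μ := by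
        refine lintegral_mono fun x ↦ ?_
        rcases (hw₀ x).eq_or_lt with h | h
        · simp [← h, Real.zero_rpow hq.ne']
        · obtain ⟨k, hk, hk'⟩ := exists_mem_Ico_zpow h one_lt_two
          refine le_trans ?_ (ENNReal.le_tsum k)
          rw [indicator_of_mem (show x ∈ {x | (2 : ℝ) ^ k ≤ w x} from hk)]
          exact ENNReal.ofReal_le_ofReal (Real.rpow_le_rpow h.le hk'.le hq.le)
    _ = _ := by
        rw [lintegral_tsum fun k ↦ (measurable_const.indicator (hmeas k)).aemeasurable]
        exact tsum_congr fun k ↦ lintegral_indicator_const (hmeas k) _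

end Layers

theorem le_mul_rpow_of_forall_le_ofReal_rpow {a b c : ℝ≥0∞} {p q : ℝ} (hp : 0 < p)
    (hb : b ≠ ⊤) (hc : c ≠ ⊤)
    (h : ∀ A > 0, b ≤ ENNReal.ofReal A ^ p → a ≤ c * ENNReal.ofReal A ^ q) :
    a ≤ c * b ^ (q / p) := by
  obtain ⟨N, hN₀, hN⟩ : ∃ N : ℝ, 0 ≤ N ∧ ENNReal.ofReal N = b ^ p⁻¹ :=
    ⟨_, ENNReal.toReal_nonneg,
      ENNReal.ofReal_toReal (ENNReal.rpow_ne_top_of_nonneg (inv_nonneg.2 hp.le) hb)⟩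
  have hcont : Continuous fun A : ℝ ↦ c * ENNReal.ofReal A ^ q :=
    (ENNReal.continuous_const_mul hc).comp
      (ENNReal.continuous_rpow_const.comp ENNReal.continuous_ofReal)
  have hlim : a ≤ c * ENNReal.ofReal N ^ q := by
    refine ge_of_tendsto (hcont.continuousWithinAt (s := Ioi N)) ?_
    filter_upwards [self_mem_nhdsWithin] with A hA
    refine h A (hN₀.trans_lt hA) ?_
    rw [← ENNReal.rpow_inv_le_iff hp, ← hN]
    exact ENNReal.ofReal_le_ofReal (le_of_lt hA)
  rwa [hN, ← ENNReal.rpow_mul, inv_mul_eq_div] at hlim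

section GeometricScales

variable {s δ β ρ : ℝ}

/-- A bounded potential on the positive scales `t`, whose increment from `s * t` to `t` dominates
`t ^ (δ - β) * min t ρ ^ β`: the first summand accounts for `t ≤ ρ`, the second for `t ≥ ρ`. -/
noncomputable def scalePotential (s δ β ρ t : ℝ) : ℝ :=
  min t ρ ^ δ * (1 - s ^ δ)⁻¹ -
    s ^ (β - δ) * max t (s * ρ) ^ (δ - β) * ρ ^ β * (1 - s ^ (β - δ))⁻¹

theorem rpow_mul_min_rpow_le_scalePotential_sub (hs₀ : 0 < s) (hs₁ : s < 1) (hδ : 0 < δ)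
    (hδβ : δ < β) (hρ : 0 < ρ) {t : ℝ} (ht : 0 < t) :
    t ^ (δ - β) * min t ρ ^ β ≤ scalePotential s δ β ρ t - scalePotential s δ β ρ (s * t) := by
  have ha : 0 < 1 - s ^ δ := sub_pos.2 (Real.rpow_lt_one hs₀.le hs₁ hδ)
  have hb : 0 < 1 - s ^ (β - δ) := sub_pos.2 (Real.rpow_lt_one hs₀.le hs₁ (sub_pos.2 hδβ))
  have hst : s * t ≤ t := mul_le_of_le_one_left ht.le hs₁.le
  have hφ : min (s * t) ρ ^ δ ≤ min t ρ ^ δ := by gcongr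
  have hψ : s ^ (β - δ) * max t (s * ρ) ^ (δ - β) * ρ ^ β ≤
      s ^ (β - δ) * max (s * t) (s * ρ) ^ (δ - β) * ρ ^ β := by
    gcongr ?_ * ?_ * ?_
    exact Real.rpow_le_rpow_of_nonpos (by positivity) (by gcongr) (by linarith)
  suffices t ^ (δ - β) * min t ρ ^ β ≤ (min t ρ ^ δ - min (s * t) ρ ^ δ) * (1 - s ^ δ)⁻¹ +
      (s ^ (β - δ) * max (s * t) (s * ρ) ^ (δ - β) * ρ ^ β -
        s ^ (β - δ) * max t (s * ρ) ^ (δ - β) * ρ ^ β) * (1 - s ^ (β - δ))⁻¹ by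
    unfold scalePotential
    linarith
  rcases le_total t ρ with h | h
  · have e : min t ρ ^ δ - min (s * t) ρ ^ δ = t ^ δ * (1 - s ^ δ) := by
      rw [min_eq_left h, min_eq_left (hst.trans h), Real.mul_rpow hs₀.le ht.le]
      ring
    rw [e, mul_inv_cancel_right₀ ha.ne', min_eq_left h, ← Real.rpow_add ht, sub_add_cancel]
    exact le_add_of_nonneg_right (mul_nonneg (sub_nonneg.2 hψ) (inv_nonneg.2 hb.le))
  · have hs : s ^ (β - δ) * s ^ (δ - β) = 1 := by
      rw [← Real.rpow_add hs₀, sub_add_sub_cancel, sub_self, Real.rpow_zero]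
    have e : s ^ (β - δ) * max (s * t) (s * ρ) ^ (δ - β) * ρ ^ β -
        s ^ (β - δ) * max t (s * ρ) ^ (δ - β) * ρ ^ β =
          t ^ (δ - β) * ρ ^ β * (1 - s ^ (β - δ)) := by
      rw [max_eq_left ((mul_le_of_le_one_left hρ.le hs₁.le).trans h),
        max_eq_left (mul_le_mul_of_nonneg_left h hs₀.le), Real.mul_rpow hs₀.le ht.le]
      linear_combination t ^ (δ - β) * ρ ^ β * hs
    rw [min_eq_right h] at hφ ⊢
    rw [e, mul_inv_cancel_right₀ hb.ne']
    exact le_add_of_nonneg_left (mul_nonneg (sub_nonneg.2 hφ) (inv_nonneg.2 ha.le))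

theorem scalePotential_sub_le (hs₀ : 0 < s) (hs₁ : s < 1) (hδ : 0 < δ) (hδβ : δ < β) (hρ : 0 < ρ)
    {t t' : ℝ} (ht : 0 < t) (ht' : 0 < t') :
    scalePotential s δ β ρ t - scalePotential s δ β ρ t' ≤
      ρ ^ δ * ((1 - s ^ δ)⁻¹ + (1 - s ^ (β - δ))⁻¹) := by
  have ha : 0 < 1 - s ^ δ := sub_pos.2 (Real.rpow_lt_one hs₀.le hs₁ hδ)
  have hb : 0 < 1 - s ^ (β - δ) := sub_pos.2 (Real.rpow_lt_one hs₀.le hs₁ (sub_pos.2 hδβ))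
  have hφ : min t ρ ^ δ * (1 - s ^ δ)⁻¹ ≤ ρ ^ δ * (1 - s ^ δ)⁻¹ := by
    gcongr
    exact min_le_right t ρ
  have hψ : s ^ (β - δ) * max t' (s * ρ) ^ (δ - β) * ρ ^ β * (1 - s ^ (β - δ))⁻¹ ≤
      ρ ^ δ * (1 - s ^ (β - δ))⁻¹ := by
    gcongr
    calc s ^ (β - δ) * max t' (s * ρ) ^ (δ - β) * ρ ^ β
        ≤ s ^ (β - δ) * (s * ρ) ^ (δ - β) * ρ ^ β := by
          gcongr ?_ * ?_ * ?_
          exact Real.rpow_le_rpow_of_nonpos (by positivity) (le_max_right _ _) (by linarith)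
      _ = s ^ (β - δ) * s ^ (δ - β) * (ρ ^ (δ - β) * ρ ^ β) := by
          rw [Real.mul_rpow hs₀.le hρ.le]
          ring
      _ = ρ ^ δ := by
          rw [← Real.rpow_add hs₀, ← Real.rpow_add hρ, sub_add_sub_cancel, sub_self,
            Real.rpow_zero, one_mul, sub_add_cancel]
  have hφ₀ : 0 ≤ min t' ρ ^ δ * (1 - s ^ δ)⁻¹ := by positivity
  have hψ₀ : 0 ≤ s ^ (β - δ) * max t (s * ρ) ^ (δ - β) * ρ ^ β * (1 - s ^ (β - δ))⁻¹ := by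
    positivity
  unfold scalePotential
  linarith

theorem sum_rpow_mul_min_rpow_le (hs₀ : 0 < s) (hs₁ : s < 1) (hδ : 0 < δ) (hδβ : δ < β)
    (hρ : 0 < ρ) {L : ℝ} (hL : 0 < L) (N : ℕ) :
    ∑ k ∈ Finset.range N, (s ^ k * L) ^ (δ - β) * min (s ^ k * L) ρ ^ β ≤
      ρ ^ δ * ((1 - s ^ δ)⁻¹ + (1 - s ^ (β - δ))⁻¹) := by
  have hpos (k : ℕ) : 0 < s ^ k * L := by positivity
  calc ∑ k ∈ Finset.range N, (s ^ k * L) ^ (δ - β) * min (s ^ k * L) ρ ^ β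
      ≤ ∑ k ∈ Finset.range N,
          (scalePotential s δ β ρ (s ^ k * L) - scalePotential s δ β ρ (s ^ (k + 1) * L)) := by
        refine Finset.sum_le_sum fun k _ ↦ ?_
        rw [pow_succ', mul_assoc]
        exact rpow_mul_min_rpow_le_scalePotential_sub hs₀ hs₁ hδ hδβ hρ (hpos k)
    _ ≤ _ := by
        rw [Finset.sum_range_sub']
        exact scalePotential_sub_le hs₀ hs₁ hδ hδβ hρ (hpos 0) (hpos N)

end GeometricScales

section Energy

variable {n : ℕ} {δ τ p : ℝ} {D : Set (Eucl n)} {u w : Eucl n → ℝ}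

theorem fracKernel_eq_edist_rpow_mul (hp : 0 ≤ p) (u : Eucl n → ℝ) (x y : Eucl n) :
    fracKernel n δ p u x y =
      edist (u x) (u y) ^ p * ENNReal.ofReal ((dist x y ^ ((n : ℝ) + δ * p))⁻¹) := by
  rw [fracKernel, div_eq_mul_inv, ENNReal.ofReal_mul (by positivity), edist_dist, Real.dist_eq,
    ENNReal.ofReal_rpow_of_nonneg (abs_nonneg _) hp]

theorem measurable_uncurry_fracKernel (hu : Measurable u) :
    Measurable (Function.uncurry (fracKernel n δ p u)) := by
  unfold fracKernel Function.uncurry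
  fun_prop

theorem measurableSet_setOf_mem_tauBall :
    MeasurableSet {z : Eucl n × Eucl n | z.2 ∈ tauBall n τ D z.1} :=
  measurableSet_lt measurable_edist
    ((measurable_infEDist.comp measurable_fst).const_mul _)

theorem measurableSet_tauBall (x : Eucl n) : MeasurableSet (tauBall n τ D x) :=
  measurable_prodMk_left measurableSet_setOf_mem_tauBall

/-- The inner integral in `fracEnergyTau`: the density, at the point `x`, of the `p`-th power of
the seminorm `|u|_{W^{δ,p}_τ(D)}`. -/
noncomputable def fracEnergyDensity (n : ℕ) (δ τ p : ℝ) (D : Set (Eucl n)) (u : Eucl n → ℝ)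
    (x : Eucl n) : ℝ≥0∞ :=
  ∫⁻ y in tauBall n τ D x, fracKernel n δ p u x y

theorem setLIntegral_fracEnergyDensity :
    ∫⁻ x in D, fracEnergyDensity n δ τ p D u x = fracEnergyTau n δ τ p D u :=
  rfl

theorem measurable_fracEnergyDensity (hu : Measurable u) :
    Measurable (fracEnergyDensity n δ τ p D u) := by
  have h := ((measurable_uncurry_fracKernel (δ := δ) (p := p) hu).indicator
    (measurableSet_setOf_mem_tauBall (τ := τ) (D := D))).lintegral_prod_right' (ν := volume)
  convert h using 2 with x
  exact (lintegral_indicator (measurableSet_tauBall x) _).symm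

theorem fracEnergyTau_le_of_edist_le (hp : 0 ≤ p)
    (h : ∀ x y, edist (w x) (w y) ≤ edist (u x) (u y)) :
    fracEnergyTau n δ τ p D w ≤ fracEnergyTau n δ τ p D u := by
  refine lintegral_mono fun x ↦ lintegral_mono fun y ↦ ?_
  rw [fracKernel_eq_edist_rpow_mul hp, fracKernel_eq_edist_rpow_mul hp]
  gcongr
  exact h x y

theorem edist_rpow_le_mul_fracKernel (hδ : 0 ≤ δ) (hp : 0 < p) {x y : Eucl n} {R : ℝ}
    (hR : dist x y ≤ R) :
    edist (u x) (u y) ^ p ≤ ENNReal.ofReal (R ^ ((n : ℝ) + δ * p)) * fracKernel n δ p u x y := by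
  rcases eq_or_ne x y with rfl | hxy
  · simp [hp]
  have hd : 0 < dist x y ^ ((n : ℝ) + δ * p) := Real.rpow_pos_of_pos (dist_pos.2 hxy) _
  rw [fracKernel_eq_edist_rpow_mul hp.le, mul_left_comm,
    ← ENNReal.ofReal_mul (Real.rpow_nonneg (dist_nonneg.trans hR) _)]
  refine le_mul_of_one_le_right' (ENNReal.one_le_ofReal.2 ?_)
  rw [← div_eq_mul_inv, one_le_div hd]
  exact Real.rpow_le_rpow dist_nonneg hR (by positivity)

theorem setLAverage_edist_rpow_le (hδ : 0 ≤ δ) (hp : 1 ≤ p) (hu : Measurable u) {x : Eucl n}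
    {B : Set (Eucl n)} (hB : MeasurableSet B) (hBx : B ⊆ tauBall n τ D x) {R : ℝ}
    (hR : ∀ y ∈ B, dist x y ≤ R) :
    (⨍⁻ y in B, edist (u x) (u y) ∂volume) ^ p ≤
      ENNReal.ofReal (R ^ ((n : ℝ) + δ * p)) / volume B * fracEnergyDensity n δ τ p D u x := by
  set c := ENNReal.ofReal (R ^ ((n : ℝ) + δ * p))
  have hdist : Measurable fun y ↦ edist (u x) (u y) := measurable_edist_right.comp hu
  have hker : Measurable (fracKernel n δ p u x) :=
    (measurable_uncurry_fracKernel hu).of_uncurry_left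
  calc (⨍⁻ y in B, edist (u x) (u y) ∂volume) ^ p
      ≤ ⨍⁻ y in B, edist (u x) (u y) ^ p ∂volume :=
        rpow_laverage_le_laverage_rpow hdist.aemeasurable hp
    _ = (∫⁻ y in B, edist (u x) (u y) ^ p) / volume B := setLAverage_eq _ _ _
    _ ≤ (∫⁻ y in B, c * fracKernel n δ p u x y) / volume B := by
        gcongr ?_ / _
        exact setLIntegral_mono' hB fun y hy ↦
          edist_rpow_le_mul_fracKernel hδ (one_pos.trans_le hp) (hR y hy)
    _ ≤ c * fracEnergyDensity n δ τ p D u x / volume B := by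
        rw [lintegral_const_mul _ hker]
        gcongr
        exact lintegral_mono_set hBx
    _ = _ := ENNReal.mul_div_right_comm

theorem setLAverage_setLAverage_edist_rpow_le (hδ : 0 ≤ δ) (hp : 1 ≤ p) (hu : Measurable u)
    {A B : Set (Eucl n)} (hA : MeasurableSet A) (hB : MeasurableSet B)
    (hAB : ∀ z ∈ A, B ⊆ tauBall n τ D z) {R : ℝ} (hR : ∀ z ∈ A, ∀ y ∈ B, dist z y ≤ R) :
    (⨍⁻ z in A, ⨍⁻ y in B, edist (u z) (u y) ∂volume ∂volume) ^ p ≤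
      ENNReal.ofReal (R ^ ((n : ℝ) + δ * p)) / volume B / volume A *
        ∫⁻ z in A, fracEnergyDensity n δ τ p D u z := by
  set c := ENNReal.ofReal (R ^ ((n : ℝ) + δ * p))
  have hmeas : Measurable fun z ↦ ⨍⁻ y in B, edist (u z) (u y) ∂volume := by
    have h : Measurable fun z : Eucl n × Eucl n ↦ edist (u z.1) (u z.2) := by fun_prop
    simp_rw [setLAverage_eq]
    exact h.lintegral_prod_right'.div_const _
  calc (⨍⁻ z in A, ⨍⁻ y in B, edist (u z) (u y) ∂volume ∂volume) ^ p
      ≤ ⨍⁻ z in A, (⨍⁻ y in B, edist (u z) (u y) ∂volume) ^ p ∂volume :=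
        rpow_laverage_le_laverage_rpow hmeas.aemeasurable hp
    _ = (∫⁻ z in A, (⨍⁻ y in B, edist (u z) (u y) ∂volume) ^ p) / volume A := setLAverage_eq _ _ _
    _ ≤ (∫⁻ z in A, c / volume B * fracEnergyDensity n δ τ p D u z) / volume A := by
        gcongr ?_ / _
        exact setLIntegral_mono' hA fun z hz ↦
          setLAverage_edist_rpow_le hδ hp hu hB (hAB z hz) (hR z hz)
    _ = _ := by
        rw [lintegral_const_mul _ (measurable_fracEnergyDensity hu), ENNReal.mul_div_right_comm]

end Energy

section Truncation

theorem edist_clamp_eq_volume {a b lo hi : ℝ} (h : lo ≤ hi) :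
    edist (max lo (min a hi)) (max lo (min b hi)) = volume (uIoc a b ∩ Ioc lo hi) := by
  wlog hab : a ≤ b generalizing a b
  · rw [edist_comm, uIoc_comm]
    exact this (le_of_not_ge hab)
  rw [uIoc_of_le hab, Ioc_inter_Ioc, Real.volume_Ioc, edist_comm, edist_dist, Real.dist_eq,
    abs_of_nonneg (sub_nonneg.2 (by gcongr))]
  rcases le_total (min b hi) (max a lo) with hle | hle
  · rw [ENNReal.ofReal_of_nonpos (sub_nonpos.2 hle), ENNReal.ofReal_of_nonpos]
    simp only [min_def, max_def] at *
    split_ifs at * <;> linarith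
  · congr 1
    simp only [min_def, max_def] at *
    split_ifs at * <;> linarith

/-- The part of `t` between the levels `2 ^ (k - 1)` and `2 ^ k`. -/
noncomputable def dyadicClamp (k : ℤ) (t : ℝ) : ℝ :=
  max (2 ^ (k - 1)) (min t (2 ^ k))

theorem measurable_dyadicClamp (k : ℤ) : Measurable (dyadicClamp k) := by
  unfold dyadicClamp
  fun_prop

theorem tsum_edist_dyadicClamp_le (a b : ℝ) :
    ∑' k : ℤ, edist (dyadicClamp k a) (dyadicClamp k b) ≤ edist a b := by
  have hmono : Monotone fun k : ℤ ↦ (2 : ℝ) ^ k := zpow_right_mono₀ one_le_two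
  simp_rw [dyadicClamp, fun k : ℤ ↦ edist_clamp_eq_volume (a := a) (b := b)
    (hmono (sub_one_lt k).le)]
  rw [← measure_iUnion _ fun k ↦ measurableSet_uIoc.inter measurableSet_Ioc]
  · calc volume (⋃ k : ℤ, uIoc a b ∩ Ioc ((2 : ℝ) ^ (k - 1)) (2 ^ k))
        ≤ volume (uIoc a b) := measure_mono (iUnion_subset fun k ↦ inter_subset_left)
      _ = edist a b := by rw [Real.volume_uIoc, edist_comm, edist_dist, Real.dist_eq]
  · exact fun i j hij ↦
      (hmono.pairwise_disjoint_on_Ioc_pred hij).mono inter_subset_right inter_subset_right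

variable {n : ℕ} {δ τ p : ℝ} {D : Set (Eucl n)} {w : Eucl n → ℝ}

theorem tsum_fracKernel_dyadicClamp_le (hp : 1 ≤ p) (w : Eucl n → ℝ) (x y : Eucl n) :
    ∑' k : ℤ, fracKernel n δ p (dyadicClamp k ∘ w) x y ≤ fracKernel n δ p w x y := by
  have hp₀ : 0 ≤ p := zero_le_one.trans hp
  simp_rw [fracKernel_eq_edist_rpow_mul hp₀, ENNReal.tsum_mul_right]
  gcongr
  exact (tsum_rpow_le_rpow_tsum _ hp).trans
    (ENNReal.rpow_le_rpow (tsum_edist_dyadicClamp_le _ _) hp₀)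

theorem tsum_fracEnergyTau_dyadicClamp_le (hp : 1 ≤ p) (hw : Measurable w) :
    ∑' k : ℤ, fracEnergyTau n δ τ p D (dyadicClamp k ∘ w) ≤ fracEnergyTau n δ τ p D w := by
  have hmeas (k : ℤ) : Measurable (dyadicClamp k ∘ w) := (measurable_dyadicClamp k).comp hw
  have hker (k : ℤ) (x : Eucl n) : Measurable (fracKernel n δ p (dyadicClamp k ∘ w) x) :=
    (measurable_uncurry_fracKernel (hmeas k)).of_uncurry_left
  simp_rw [← setLIntegral_fracEnergyDensity]
  rw [← lintegral_tsum fun k ↦ (measurable_fracEnergyDensity (hmeas k)).aemeasurable]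
  refine lintegral_mono fun x ↦ ?_
  unfold fracEnergyDensity
  rw [← lintegral_tsum fun k ↦ (hker k x).aemeasurable]
  exact lintegral_mono fun y ↦ tsum_fracKernel_dyadicClamp_le hp w x y

end Truncation

section Chain

variable {n : ℕ} {c δ τ p ε : ℝ} {D : Set (Eucl n)} {u : Eucl n → ℝ}

theorem ball_subset_tauBall (hτ : 0 ≤ τ) (x : Eucl n) :
    ball x (τ * infDist x (frontier D)) ⊆ tauBall n τ D x := fun y hy ↦ by
  calc edist x y < ENNReal.ofReal (τ * infDist x (frontier D)) := by
        rwa [edist_comm, edist_lt_ofReal]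
    _ ≤ ENNReal.ofReal τ * infEDist x (frontier D) := by
        rw [ENNReal.ofReal_mul hτ]
        gcongr
        exact ENNReal.ofReal_toReal_le

theorem volume_ball_eq_ofReal (x : Eucl n) {r : ℝ} (hr : 0 < r) :
    volume (ball x r) = ENNReal.ofReal (r ^ n * volume.real (ball (0 : Eucl n) 1)) := by
  rw [Measure.addHaar_ball_of_pos _ _ hr, finrank_euclideanSpace, Fintype.card_fin,
    ENNReal.ofReal_mul (by positivity), ofReal_measureReal measure_ball_lt_top.ne]

theorem volume_real_unitBall_pos : 0 < volume.real (ball (0 : Eucl n) 1) :=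
  ENNReal.toReal_pos (measure_ball_pos _ _ one_pos).ne' measure_ball_lt_top.ne

/-- A curve on `[0, L]` in `D` whose distance to the boundary grows at least linearly with the
distance travelled: half of a John curve. -/
structure IsCarrotArc (c : ℝ) (D : Set (Eucl n)) (γ : ℝ → Eucl n) (L : ℝ) : Prop where
  mem : ∀ t ∈ Icc 0 L, γ t ∈ D
  lipschitzOnWith : LipschitzOnWith 1 γ (Icc 0 L)
  div_le_infDist : ∀ t ∈ Icc 0 L, t / c ≤ infDist (γ t) (frontier D)

theorem IsJohnDomain.exists_isCarrotArc (hD : IsJohnDomain n c D) {x y : Eucl n} (hx : x ∈ D)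
    (hy : y ∈ D) (hxy : x ≠ y) :
    ∃ L > 0, ∃ γ γ' : ℝ → Eucl n, γ 0 = x ∧ γ' 0 = y ∧ γ L = γ' L ∧
      IsCarrotArc c D γ L ∧ IsCarrotArc c D γ' L := by
  obtain ⟨ℓ, hℓ, γ, rfl, rfl, hmem, hlip, hdist⟩ := hD.2.2 x hx y hy
  have hℓ₀ : 0 < ℓ := hℓ.lt_of_ne (by rintro rfl; exact hxy rfl)
  have hIcc {t : ℝ} (ht : t ∈ Icc 0 (ℓ / 2)) : t ∈ Icc 0 ℓ ∧ ℓ - t ∈ Icc 0 ℓ := by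
    obtain ⟨h₀, h₁⟩ := ht
    exact ⟨⟨h₀, by linarith⟩, by linarith, by linarith⟩
  have hmin {t : ℝ} (ht : t ∈ Icc 0 (ℓ / 2)) : min t (ℓ - t) = t :=
    min_eq_left (by linarith [ht.2])
  refine ⟨ℓ / 2, half_pos hℓ₀, γ, fun t ↦ γ (ℓ - t), rfl, by simp only [sub_zero], by ring_nf,
    ⟨fun t ht ↦ hmem t (hIcc ht).1, hlip.mono fun t ht ↦ (hIcc ht).1, fun t ht ↦ ?_⟩,
    ⟨fun t ht ↦ hmem _ (hIcc ht).2, fun s hs t ht ↦ ?_, fun t ht ↦ ?_⟩⟩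
  · simpa only [hmin ht] using hdist t (hIcc ht).1
  · simpa only [edist_sub_left] using hlip (hIcc hs).2 (hIcc ht).2
  · simpa only [sub_sub_cancel, min_comm _ t, hmin ht] using hdist _ (hIcc ht).2

/-- `ε` is so small that, along a carrot arc with constant `c`, any two points of the balls of
radii `ε * t` and `ε * (1 - ε) * t` around the points at times `t` and `(1 - ε) * t` lie in each
other's `tauBall`. -/
structure IsChainRatio (c τ ε : ℝ) : Prop where
  pos : 0 < ε
  three_mul_le_one : 3 * ε ≤ 1
  add_mul_le : (3 + τ) * (c * ε) ≤ τ

theorem exists_isChainRatio (hc : 0 < c) (hτ : 0 < τ) : ∃ ε, IsChainRatio c τ ε := by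
  refine ⟨τ / (3 * (c + 1) * (3 + τ)), by positivity, ?_, ?_⟩
  · rw [mul_div_assoc', div_le_one (by positivity)]
    nlinarith [mul_pos hc hτ]
  · rw [mul_div_assoc', mul_div_assoc', div_le_iff₀ (by positivity)]
    nlinarith [mul_pos hc hτ, mul_pos (mul_pos hc hτ) hτ]

theorem IsChainRatio.one_sub_pos (hε : IsChainRatio c τ ε) : 0 < 1 - ε := by
  linarith [hε.three_mul_le_one, hε.pos]

theorem IsChainRatio.mul_le_div (hε : IsChainRatio c τ ε) (hc : 0 < c) (hτ : 0 ≤ τ) {t : ℝ}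
    (ht : 0 ≤ t) : ε * t ≤ t / c := by
  have hcε : ε * c ≤ 1 := by nlinarith [hε.add_mul_le, mul_pos hc hε.pos]
  rw [le_div_iff₀ hc]
  nlinarith

theorem IsChainRatio.mem_tauBall (hε : IsChainRatio c τ ε) (hc : 0 < c) (hτ : 0 ≤ τ)
    {a z y : Eucl n} {t : ℝ} (ht : 0 ≤ t) (ha : t / c ≤ infDist a (frontier D))
    (hz : z ∈ ball a (ε * t)) (hy : dist z y < 3 * ε * t) : y ∈ tauBall n τ D z := by
  refine ball_subset_tauBall hτ z (mem_ball'.2 (hy.trans_le ?_))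
  have hz' : t / c - ε * t ≤ infDist z (frontier D) := by
    linarith [infDist_le_infDist_add_dist (s := frontier D) (x := a) (y := z), mem_ball'.1 hz]
  calc 3 * ε * t = (3 + τ) * (c * ε) * (t / c) - τ * (ε * t) := by field_simp; ring
    _ ≤ τ * (t / c) - τ * (ε * t) := by gcongr; exact hε.add_mul_le
    _ = τ * (t / c - ε * t) := by ring
    _ ≤ _ := by gcongr

/-- The constant in the comparison of consecutive averages in a chain of balls of ratio `ε`: up to
powers of the radius, the inverse of the product of the volumes of two consecutive balls. -/
noncomputable def chainConst (n : ℕ) (ε : ℝ) : ℝ :=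
  (volume.real (ball (0 : Eucl n) 1) ^ 2 * ε ^ (2 * n) * (1 - ε) ^ n)⁻¹

theorem chainConst_pos (hε₀ : 0 < ε) (hε₁ : ε < 1) : 0 < chainConst n ε := by
  have hω := volume_real_unitBall_pos (n := n)
  have hs : 0 < 1 - ε := sub_pos.2 hε₁
  unfold chainConst
  positivity

theorem rpow_div_volume_ball_div_volume_ball_le (hε : IsChainRatio c τ ε) (hδp : 0 ≤ δ * p)
    (a b : Eucl n) {t : ℝ} (ht : 0 < t) :
    ENNReal.ofReal ((3 * ε * t) ^ ((n : ℝ) + δ * p)) / volume (ball b (ε * ((1 - ε) * t))) /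
        volume (ball a (ε * t)) ≤
      ENNReal.ofReal (chainConst n ε * t ^ (δ * p - n)) := by
  have hω := volume_real_unitBall_pos (n := n)
  have hε₀ := hε.pos
  have hs := hε.one_sub_pos
  rw [volume_ball_eq_ofReal _ (by positivity), volume_ball_eq_ofReal _ (by positivity),
    ← ENNReal.ofReal_div_of_pos (by positivity), ← ENNReal.ofReal_div_of_pos (by positivity)]
  refine ENNReal.ofReal_le_ofReal ?_
  have hR : (3 * ε * t) ^ ((n : ℝ) + δ * p) ≤ t ^ (2 * n) * t ^ (δ * p - n) := by
    rw [← Real.rpow_natCast t (2 * n), ← Real.rpow_add ht]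
    refine (Real.rpow_le_rpow (by positivity)
      (mul_le_of_le_one_left ht.le hε.three_mul_le_one) (by positivity)).trans_eq ?_
    congr 1
    push_cast
    ring
  rw [div_div, div_le_iff₀ (by positivity)]
  refine hR.trans_eq ?_
  unfold chainConst
  simp only [mul_pow, pow_mul']
  field_simp

theorem setLAverage_ball_edist_le_add (hε : IsChainRatio c τ ε) (hc : 0 < c) (hτ : 0 ≤ τ)
    (hδ : 0 ≤ δ) (hp : 1 ≤ p) (hu : Measurable u) {a b : Eucl n} {t : ℝ} (ht : 0 < t)
    (ha : t / c ≤ infDist a (frontier D)) (hab : dist a b ≤ ε * t) (v : ℝ) :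
    ⨍⁻ y in ball a (ε * t), edist v (u y) ∂volume ≤
      ⨍⁻ y in ball b (ε * ((1 - ε) * t)), edist v (u y) ∂volume +
        (ENNReal.ofReal (chainConst n ε * t ^ (δ * p - n)) *
          ∫⁻ z in ball a (ε * t), fracEnergyDensity n δ τ p D u z) ^ (1 / p) := by
  have hp₀ : 0 < p := one_pos.trans_le hp
  have hε₀ := hε.pos
  have hs := hε.one_sub_pos
  have hfin (x : Eucl n) (r : ℝ) : IsFiniteMeasure (volume.restrict (ball x r)) :=
    isFiniteMeasure_restrict.2 measure_ball_lt_top.ne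
  have hne (x : Eucl n) {r : ℝ} (hr : 0 < r) : NeZero (volume.restrict (ball x r)) :=
    ⟨Measure.restrict_eq_zero.not.2 (measure_ball_pos _ _ hr).ne'⟩
  have := hne a (mul_pos hε₀ ht)
  have := hne b (mul_pos hε₀ (mul_pos hs ht))
  have hdist : ∀ z ∈ ball a (ε * t), ∀ y ∈ ball b (ε * ((1 - ε) * t)), dist z y < 3 * ε * t := by
    intro z hz y hy
    have hy' : dist b y < ε * t := by
      nlinarith [mem_ball'.1 hy, mul_pos (mul_pos hε₀ hε₀) ht]
    linarith [dist_triangle4 z a b y, mem_ball.1 hz]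
  refine (laverage_edist_le_add hu v).trans (add_le_add_right ?_ _)
  rw [one_div, ENNReal.le_rpow_inv_iff hp₀]
  refine (setLAverage_setLAverage_edist_rpow_le hδ hp hu measurableSet_ball measurableSet_ball
    (fun z hz y hy ↦ hε.mem_tauBall hc hτ ht.le ha hz (hdist z hz y hy))
    fun z hz y hy ↦ (hdist z hz y hy).le).trans ?_
  gcongr
  exact rpow_div_volume_ball_div_volume_ball_le hε (by positivity) a b ht

end Chain

section Arc

open Filter Topology

variable {n : ℕ} {c δ τ p ε : ℝ} {D : Set (Eucl n)} {u : Eucl n → ℝ} {γ : ℝ → Eucl n} {L : ℝ}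

theorem IsCarrotArc.dist_le (hγ : IsCarrotArc c D γ L) {t t' : ℝ} (ht : t ∈ Icc 0 L)
    (ht' : t' ∈ Icc 0 L) : dist (γ t) (γ t') ≤ |t - t'| := by
  simpa only [NNReal.coe_one, one_mul, Real.dist_eq] using
    hγ.lipschitzOnWith.dist_le_mul t ht t' ht'

theorem IsCarrotArc.dist_zero_le (hγ : IsCarrotArc c D γ L) {t : ℝ} (ht : t ∈ Icc 0 L) :
    dist (γ t) (γ 0) ≤ t := by
  simpa only [sub_zero, abs_of_nonneg ht.1] using
    hγ.dist_le ht ⟨le_rfl, ht.1.trans ht.2⟩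

theorem IsCarrotArc.ball_subset (hγ : IsCarrotArc c D γ L) (hε : IsChainRatio c τ ε) (hc : 0 < c)
    (hτ : 0 ≤ τ) {t : ℝ} (ht : t ∈ Icc 0 L) :
    ball (γ t) (ε * t) ⊆ D ∩ closedBall (γ 0) (2 * t) := by
  refine subset_inter ((ball_subset_ball ((hε.mul_le_div hc hτ ht.1).trans
    (hγ.div_le_infDist t ht))).trans (ball_infDist_frontier_subset (hγ.mem t ht))) ?_
  refine ball_subset_closedBall.trans (closedBall_subset_closedBall' ?_)
  nlinarith [hγ.dist_zero_le ht, hε.three_mul_le_one, hε.pos, ht.1]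

theorem IsCarrotArc.setLAverage_edist_le_add (hγ : IsCarrotArc c D γ L) (hε : IsChainRatio c τ ε)
    (hc : 0 < c) (hτ : 0 ≤ τ) (hδ : 0 ≤ δ) (hp : 1 ≤ p) (hu : Measurable u) {K m t : ℝ}
    (hK : 0 ≤ K) (hm : 0 ≤ m) (ht : t ∈ Ioc 0 L)
    (hgrowth : ∫⁻ z in D ∩ closedBall (γ 0) (2 * t), fracEnergyDensity n δ τ p D u z ≤
      ENNReal.ofReal (K * m ^ n)) (v : ℝ) :
    ⨍⁻ y in ball (γ t) (ε * t), edist v (u y) ∂volume ≤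
      ⨍⁻ y in ball (γ ((1 - ε) * t)) (ε * ((1 - ε) * t)), edist v (u y) ∂volume +
        ENNReal.ofReal
          ((chainConst n ε * K) ^ (1 / p) * (t ^ (δ - n / p) * m ^ ((n : ℝ) / p))) := by
  have ht₀ : 0 < t := ht.1
  have hε₀ := hε.pos
  have hs := hε.one_sub_pos
  have htI : t ∈ Icc 0 L := Ioc_subset_Icc_self ht
  have hsI : (1 - ε) * t ∈ Icc 0 L :=
    ⟨by positivity, (mul_le_of_le_one_left ht₀.le (by linarith)).trans ht.2⟩
  have hab : dist (γ t) (γ ((1 - ε) * t)) ≤ ε * t := by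
    refine (hγ.dist_le htI hsI).trans_eq ?_
    rw [show t - (1 - ε) * t = ε * t by ring, abs_of_pos (by positivity)]
  have hC : 0 < chainConst n ε := chainConst_pos hε₀ (by linarith)
  have hp₀ : 0 < p := one_pos.trans_le hp
  refine (setLAverage_ball_edist_le_add hε hc hτ hδ hp hu ht₀ (hγ.div_le_infDist t htI) hab
    v).trans (add_le_add_right ?_ _)
  calc (ENNReal.ofReal (chainConst n ε * t ^ (δ * p - n)) *
          ∫⁻ z in ball (γ t) (ε * t), fracEnergyDensity n δ τ p D u z) ^ (1 / p)
      ≤ (ENNReal.ofReal (chainConst n ε * t ^ (δ * p - n)) *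
          ENNReal.ofReal (K * m ^ n)) ^ (1 / p) := by
        gcongr
        exact (lintegral_mono_set (hγ.ball_subset hε hc hτ htI)).trans hgrowth
    _ = ENNReal.ofReal ((chainConst n ε * K * (t ^ (δ * p - n) * m ^ n)) ^ (1 / p)) := by
        rw [← ENNReal.ofReal_mul (by positivity),
          ENNReal.ofReal_rpow_of_nonneg (by positivity) (by positivity)]
        ring_nf
    _ = _ := by
        rw [Real.mul_rpow (x := chainConst n ε * K) (by positivity) (by positivity),
          Real.mul_rpow (x := t ^ _) (by positivity) (by positivity), ← Real.rpow_natCast m n,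
          ← Real.rpow_mul ht₀.le, ← Real.rpow_mul hm, mul_one_div, mul_one_div, sub_div,
          mul_div_cancel_right₀ _ hp₀.ne']

theorem IsCarrotArc.infDist_frontier_pos (hγ : IsCarrotArc c D γ L) (hc : 0 < c) (hL : 0 < L)
    (hD : IsOpen D) : 0 < infDist (γ 0) (frontier D) := by
  -- `infDist` to the empty set is `0`, so the distance bound excludes an empty boundary.
  have hne : (frontier D).Nonempty := by
    by_contra! h
    have hdist := hγ.div_le_infDist L (right_mem_Icc.2 hL.le)
    rw [h, infDist_empty] at hdist
    exact (div_pos hL hc).not_ge hdist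
  rw [← isClosed_frontier.notMem_iff_infDist_pos hne, hD.frontier_eq]
  exact fun h ↦ h.2 (hγ.mem 0 (left_mem_Icc.2 hL.le))

theorem IsCarrotArc.setLAverage_edist_rpow_le (hγ : IsCarrotArc c D γ L)
    (hε : IsChainRatio c τ ε) (hτ : 0 ≤ τ) (hδ : 0 ≤ δ) (hp : 1 ≤ p)
    (hu : Measurable u) {t : ℝ} (ht : t ∈ Ioc 0 L)
    (htx : 2 * t < τ * infDist (γ 0) (frontier D)) :
    (⨍⁻ y in ball (γ t) (ε * t), edist (u (γ 0)) (u y) ∂volume) ^ p ≤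
      ENNReal.ofReal (t ^ (δ * p) *
        (2 ^ ((n : ℝ) + δ * p) / (ε ^ n * volume.real (ball (0 : Eucl n) 1)))) *
          fracEnergyDensity n δ τ p D u (γ 0) := by
  have ht₀ : 0 < t := ht.1
  have hε₀ := hε.pos
  have hω := volume_real_unitBall_pos (n := n)
  have hdist : ∀ y ∈ ball (γ t) (ε * t), dist (γ 0) y ≤ 2 * t := fun y hy ↦ by
    have h := dist_triangle_left (γ 0) y (γ t)
    nlinarith [hγ.dist_zero_le (Ioc_subset_Icc_self ht), mem_ball'.1 hy, hε.three_mul_le_one]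
  have hsub : ball (γ t) (ε * t) ⊆ tauBall n τ D (γ 0) := fun y hy ↦
    ball_subset_tauBall hτ _ (mem_ball'.2 ((hdist y hy).trans_lt htx))
  refine (_root_.setLAverage_edist_rpow_le hδ hp hu measurableSet_ball hsub hdist).trans_eq ?_
  rw [volume_ball_eq_ofReal _ (by positivity), ← ENNReal.ofReal_div_of_pos (by positivity)]
  congr 2
  rw [Real.mul_rpow (by positivity) ht₀.le, Real.rpow_add ht₀, Real.rpow_natCast, mul_pow]
  field_simp

theorem IsCarrotArc.tendsto_setLAverage_edist (hγ : IsCarrotArc c D γ L)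
    (hε : IsChainRatio c τ ε) (hc : 0 < c) (hτ : 0 < τ) (hδ : 0 < δ) (hp : 1 ≤ p)
    (hu : Measurable u) (hL : 0 < L) (hD : IsOpen D)
    (hdens : fracEnergyDensity n δ τ p D u (γ 0) ≠ ⊤) :
    Tendsto (fun t ↦ ⨍⁻ y in ball (γ t) (ε * t), edist (u (γ 0)) (u y) ∂volume)
      (𝓝[>] 0) (𝓝 0) := by
  have hp₀ : 0 < p := one_pos.trans_le hp
  set M : ℝ := 2 ^ ((n : ℝ) + δ * p) / (ε ^ n * volume.real (ball (0 : Eucl n) 1))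
  have hbound : Tendsto (fun t : ℝ ↦ (ENNReal.ofReal (t ^ (δ * p) * M) *
      fracEnergyDensity n δ τ p D u (γ 0)) ^ p⁻¹) (𝓝[>] 0) (𝓝 0) := by
    have hpow : Tendsto (fun t : ℝ ↦ t ^ (δ * p) * M) (𝓝[>] 0) (𝓝 0) := by
      have h := (Real.continuousAt_rpow_const 0 (δ * p) (.inr (by positivity))).tendsto.mul_const M
      rw [Real.zero_rpow (by positivity), zero_mul] at h
      exact h.mono_left nhdsWithin_le_nhds
    have h := (ENNReal.Tendsto.mul_const (ENNReal.tendsto_ofReal hpow) (.inr hdens)).ennrpow_const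
      p⁻¹
    simpa [hp₀] using h
  have hpos : 0 < τ * infDist (γ 0) (frontier D) / 2 :=
    half_pos (mul_pos hτ (hγ.infDist_frontier_pos hc hL hD))
  refine tendsto_of_tendsto_of_tendsto_of_le_of_le' tendsto_const_nhds hbound
    (Eventually.of_forall fun t ↦ zero_le) ?_
  filter_upwards [Ioc_mem_nhdsGT hL, Ioo_mem_nhdsGT hpos] with t ht ht'
  rw [ENNReal.le_rpow_inv_iff hp₀]
  exact hγ.setLAverage_edist_rpow_le hε hτ.le hδ.le hp hu ht (by linarith [ht'.2])

theorem IsCarrotArc.setLAverage_edist_le_sum (hγ : IsCarrotArc c D γ L)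
    (hε : IsChainRatio c τ ε) (hc : 0 < c) (hτ : 0 ≤ τ) (hδ : 0 ≤ δ) (hp : 1 ≤ p)
    (hu : Measurable u) (hL : 0 < L) {K ρ : ℝ} (hK : 0 ≤ K) (hρ : 0 ≤ ρ)
    (hgrowth : ∀ t > 0, ∫⁻ z in D ∩ closedBall (γ 0) (2 * t), fracEnergyDensity n δ τ p D u z ≤
      ENNReal.ofReal (K * min t ρ ^ n)) (v : ℝ) (N : ℕ) :
    ⨍⁻ y in ball (γ L) (ε * L), edist v (u y) ∂volume ≤
      ⨍⁻ y in ball (γ ((1 - ε) ^ N * L)) (ε * ((1 - ε) ^ N * L)), edist v (u y) ∂volume +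
        ENNReal.ofReal ((chainConst n ε * K) ^ (1 / p) * ∑ k ∈ Finset.range N,
          ((1 - ε) ^ k * L) ^ (δ - n / p) * min ((1 - ε) ^ k * L) ρ ^ ((n : ℝ) / p)) := by
  have hs := hε.one_sub_pos
  have hs₁ : 1 - ε ≤ 1 := by linarith [hε.pos]
  have hC : 0 < chainConst n ε := chainConst_pos hε.pos (by linarith)
  have hpos (k : ℕ) : 0 < (1 - ε) ^ k * L := by positivity
  induction N with
  | zero => simp
  | succ N ih =>
    refine ih.trans ?_
    have hstep := hγ.setLAverage_edist_le_add hε hc hτ hδ hp hu hK (le_min (hpos N).le hρ)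
      ⟨hpos N, mul_le_of_le_one_left hL.le (pow_le_one₀ hs.le hs₁)⟩ (hgrowth _ (hpos N)) v
    rw [← mul_assoc (1 - ε), ← pow_succ'] at hstep
    refine (add_le_add_left hstep _).trans_eq ?_
    have hterm (k : ℕ) : 0 ≤ ((1 - ε) ^ k * L) ^ (δ - n / p) *
        min ((1 - ε) ^ k * L) ρ ^ ((n : ℝ) / p) := by
      have := le_min (hpos k).le hρ
      have := (hpos k).le
      positivity
    rw [add_assoc, ← ENNReal.ofReal_add (mul_nonneg (by positivity) (hterm N))
      (mul_nonneg (by positivity) (Finset.sum_nonneg fun k _ ↦ hterm k)),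
      Finset.sum_range_succ_comm, mul_add]

theorem IsCarrotArc.setLAverage_edist_le (hγ : IsCarrotArc c D γ L)
    (hε : IsChainRatio c τ ε) (hc : 0 < c) (hτ : 0 < τ) (hδ : 0 < δ) (hp : 1 ≤ p)
    (hpn : δ < n / p) (hu : Measurable u) (hL : 0 < L) (hD : IsOpen D)
    (hdens : fracEnergyDensity n δ τ p D u (γ 0) ≠ ⊤) {K ρ : ℝ} (hK : 0 ≤ K) (hρ : 0 < ρ)
    (hgrowth : ∀ t > 0, ∫⁻ z in D ∩ closedBall (γ 0) (2 * t), fracEnergyDensity n δ τ p D u z ≤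
      ENNReal.ofReal (K * min t ρ ^ n)) :
    ⨍⁻ y in ball (γ L) (ε * L), edist (u (γ 0)) (u y) ∂volume ≤
      ENNReal.ofReal ((chainConst n ε * K) ^ (1 / p) *
        (ρ ^ δ * ((1 - (1 - ε) ^ δ)⁻¹ + (1 - (1 - ε) ^ (n / p - δ))⁻¹))) := by
  have hs := hε.one_sub_pos
  have hs₁ : 1 - ε < 1 := by linarith [hε.pos]
  have hC : 0 < chainConst n ε := chainConst_pos hε.pos (by linarith)
  have hscale : Tendsto (fun N : ℕ ↦ (1 - ε) ^ N * L) atTop (𝓝[>] 0) := by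
    refine tendsto_nhdsWithin_iff.2 ⟨?_, .of_forall fun N ↦ by simp only [mem_Ioi]; positivity⟩
    simpa only [zero_mul] using (tendsto_pow_atTop_nhds_zero_of_lt_one hs.le hs₁).mul_const L
  have hlim := ((hγ.tendsto_setLAverage_edist hε hc hτ hδ hp hu hL hD hdens).comp
    hscale).add_const (ENNReal.ofReal ((chainConst n ε * K) ^ (1 / p) *
        (ρ ^ δ * ((1 - (1 - ε) ^ δ)⁻¹ + (1 - (1 - ε) ^ (n / p - δ))⁻¹))))
  rw [zero_add] at hlim
  refine ge_of_tendsto' hlim fun N ↦ ?_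
  refine (hγ.setLAverage_edist_le_sum hε hc hτ.le hδ.le hp hu hL hK hρ.le hgrowth _ N).trans ?_
  refine add_le_add_right (ENNReal.ofReal_le_ofReal ?_) _
  gcongr
  exact sum_rpow_mul_min_rpow_le hs hs₁ hδ hpn hρ hL N

end Arc

section WeakOscillation

variable {n : ℕ} {c δ τ p : ℝ} {D : Set (Eucl n)}

theorem volume_closedBall_eq_ofReal (x : Eucl n) {r : ℝ} (hr : 0 < r) :
    volume (closedBall x r) = ENNReal.ofReal (r ^ n * volume.real (ball (0 : Eucl n) 1)) := by
  rw [Measure.addHaar_closedBall _ _ hr.le, ← Measure.addHaar_ball_of_pos _ x hr,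
    volume_ball_eq_ofReal x hr]

theorem volume_setOf_lt_setLIntegral_closedBall_le [Nontrivial (Eucl n)] {f : Eucl n → ℝ≥0∞}
    {κ E : ℝ} (hκ : 0 < κ) (hint : ∫⁻ z, f z ≤ ENNReal.ofReal E) :
    volume {x | ∃ r > 0, ENNReal.ofReal κ * volume (closedBall x r) <
      ∫⁻ z in closedBall x r, f z} ≤ ENNReal.ofReal (5 ^ n * E / κ) := by
  have hweak := mul_measure_setOf_lt_setLIntegral_closedBall_le volume f (ENNReal.ofReal κ)
  rw [finrank_euclideanSpace, Fintype.card_fin] at hweak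
  rw [ENNReal.ofReal_div_of_pos hκ, ENNReal.le_div_iff_mul_le
    (.inl (ENNReal.ofReal_pos.2 hκ).ne') (.inl ENNReal.ofReal_ne_top), mul_comm,
    ENNReal.ofReal_mul (by positivity), ENNReal.ofReal_pow (by norm_num), ENNReal.ofReal_ofNat]
  exact hweak.trans (mul_le_mul_right hint _)

theorem exists_volume_le_forall_setLIntegral_closedBall_le [Nontrivial (Eucl n)]
    (hD : MeasurableSet D) {f : Eucl n → ℝ≥0∞} (hf : Measurable f) {K ρ : ℝ} (hK : 0 < K)
    (hint : ∫⁻ z in D, f z ≤ ENNReal.ofReal (K * ρ ^ n)) :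
    ∃ B, volume B ≤ ENNReal.ofReal (volume.real (ball (0 : Eucl n) 1) * 10 ^ n * ρ ^ n) ∧
      ∀ x ∈ D \ B, f x ≠ ⊤ ∧
        ∀ t > 0, ∫⁻ z in D ∩ closedBall x (2 * t), f z ≤ ENNReal.ofReal (K * min t ρ ^ n) := by
  set ω := volume.real (ball (0 : Eucl n) 1) with hω_def
  have hω : 0 < ω := volume_real_unitBall_pos
  set κ := K / (2 ^ n * ω) with hκ
  have hκ₀ : 0 < κ := by positivity
  set M := {x | ∃ r > 0, ENNReal.ofReal κ * volume (closedBall x r) <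
    ∫⁻ z in closedBall x r, D.indicator f z}
  have hM : volume M ≤ ENNReal.ofReal (ω * 10 ^ n * ρ ^ n) := by
    refine (volume_setOf_lt_setLIntegral_closedBall_le hκ₀
      ((lintegral_indicator hD f).trans_le hint)).trans_eq (congrArg _ ?_)
    rw [hκ, show (10 : ℝ) = 5 * 2 by norm_num, mul_pow]
    field_simp
  have htop : volume (D ∩ {x | f x = ⊤}) = 0 := by
    rw [inter_comm, ← Measure.restrict_apply' hD]
    simpa only [ae_iff, not_lt, top_le_iff] using
      ae_lt_top hf (hint.trans_lt ENNReal.ofReal_lt_top).ne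
  refine ⟨M ∪ D ∩ {x | f x = ⊤}, (measure_union_le _ _).trans (by rwa [htop, add_zero]),
    fun x hx ↦ ⟨fun h ↦ hx.2 (.inr ⟨hx.1, h⟩), fun t ht ↦ ?_⟩⟩
  have hmax : ∫⁻ z in D ∩ closedBall x (2 * t), f z ≤ ENNReal.ofReal (K * t ^ n) := by
    rw [← setLIntegral_indicator hD]
    refine (not_lt.1 fun h ↦ hx.2 (.inl ⟨2 * t, by positivity, h⟩)).trans_eq ?_
    rw [volume_closedBall_eq_ofReal x (by positivity), ← hω_def, ← ENNReal.ofReal_mul hκ₀.le, hκ,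
      mul_pow]
    congr 1
    field_simp
  rcases le_total t ρ with h | h
  · rwa [min_eq_left h]
  · rw [min_eq_right h]
    exact (lintegral_mono_set inter_subset_left).trans hint

/-- The constant in the oscillation bound obtained by summing the chains of two points. -/
noncomputable def oscillationConst (n : ℕ) (δ p ε : ℝ) : ℝ :=
  2 * (chainConst n ε ^ (1 / p) * ((1 - (1 - ε) ^ δ)⁻¹ + (1 - (1 - ε) ^ (n / p - δ))⁻¹))

theorem IsChainRatio.oscillationConst_pos {ε : ℝ} (hε : IsChainRatio c τ ε) (hδ : 0 < δ)
    (hpn : δ < n / p) : 0 < oscillationConst n δ p ε := by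
  have hs := hε.one_sub_pos
  have hs₁ : 1 - ε < 1 := by linarith [hε.pos]
  have hC : 0 < chainConst n ε := chainConst_pos hε.pos (by linarith)
  have ha : 0 < 1 - (1 - ε) ^ δ := sub_pos.2 (Real.rpow_lt_one hs.le hs₁ hδ)
  have hb : 0 < 1 - (1 - ε) ^ (n / p - δ) :=
    sub_pos.2 (Real.rpow_lt_one hs.le hs₁ (sub_pos.2 hpn))
  unfold oscillationConst
  positivity

theorem IsJohnDomain.abs_sub_le (hD : IsJohnDomain n c D) {ε : ℝ} (hε : IsChainRatio c τ ε)
    (hc : 0 < c) (hτ : 0 < τ) (hδ : 0 < δ) (hp : 1 ≤ p) (hpn : δ < n / p) {u : Eucl n → ℝ}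
    (hu : Measurable u) {K ρ : ℝ} (hK : 0 ≤ K) (hρ : 0 < ρ) {G : Set (Eucl n)} (hGD : G ⊆ D)
    (hG : ∀ x ∈ G, fracEnergyDensity n δ τ p D u x ≠ ⊤ ∧
      ∀ t > 0, ∫⁻ z in D ∩ closedBall x (2 * t), fracEnergyDensity n δ τ p D u z ≤
        ENNReal.ofReal (K * min t ρ ^ n)) {x y : Eucl n} (hx : x ∈ G) (hy : y ∈ G) :
    |u x - u y| ≤ oscillationConst n δ p ε * (K ^ (1 / p) * ρ ^ δ) := by
  have hS := hε.oscillationConst_pos hδ hpn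
  have hC : 0 < chainConst n ε := chainConst_pos hε.pos (by linarith [hε.one_sub_pos])
  rcases eq_or_ne x y with rfl | hxy
  · rw [sub_self, abs_zero]
    positivity
  obtain ⟨L, hL, γ, γ', rfl, rfl, hmeet, hγ, hγ'⟩ :=
    hD.exists_isCarrotArc (hGD hx) (hGD hy) hxy
  have hfin : IsFiniteMeasure (volume.restrict (ball (γ L) (ε * L))) :=
    isFiniteMeasure_restrict.2 measure_ball_lt_top.ne
  have hne : NeZero (volume.restrict (ball (γ L) (ε * L))) :=
    ⟨Measure.restrict_eq_zero.not.2 (measure_ball_pos _ _ (mul_pos hε.pos hL)).ne'⟩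
  have hhalf : (chainConst n ε * K) ^ (1 / p) *
      (ρ ^ δ * ((1 - (1 - ε) ^ δ)⁻¹ + (1 - (1 - ε) ^ (n / p - δ))⁻¹)) =
        oscillationConst n δ p ε * (K ^ (1 / p) * ρ ^ δ) / 2 := by
    rw [oscillationConst, Real.mul_rpow hC.le hK]
    ring
  have hx := hγ.setLAverage_edist_le hε hc hτ hδ hp hpn hu hL hD.1 (hG _ hx).1 hK hρ (hG _ hx).2
  have hy := hγ'.setLAverage_edist_le hε hc hτ hδ hp hpn hu hL hD.1 (hG _ hy).1 hK hρ (hG _ hy).2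
  rw [hhalf] at hx hy
  rw [← hmeet] at hy
  rw [← Real.dist_eq, ← edist_le_ofReal (by positivity),
    ← add_halves (oscillationConst n δ p ε * (K ^ (1 / p) * ρ ^ δ)),
    ENNReal.ofReal_add (by positivity) (by positivity)]
  exact (edist_le_laverage_edist_add hu _ _).trans (add_le_add hx hy)

/-- Weak-type oscillation estimate with exponent `q`: off a set of measure at most
`C * (A / r) ^ q`, functions with seminorm at most `A` oscillate by at most `r`. Asking for an
oscillation bound avoids choosing a constant to subtract. -/
def HasWeakOscillationBound (n : ℕ) (δ τ p q C : ℝ) (D : Set (Eucl n)) : Prop :=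
  ∀ u : Eucl n → ℝ, Measurable u → ∀ A > 0, ∀ r > 0,
    fracEnergyTau n δ τ p D u ≤ ENNReal.ofReal A ^ p →
      ∃ B, volume.restrict D B ≤ ENNReal.ofReal (C * (A / r) ^ q) ∧
        ∀ x ∉ B, ∀ y ∉ B, |u x - u y| ≤ r

-- Hedberg's balancing: `ρ` is the scale above which the total energy `A ^ p` beats the growth bound
-- coming from the maximal function, tuned so that the oscillation off the bad set is exactly `r`.
theorem exists_mul_rpow_mul_rpow_eq {S A r : ℝ} (hS : 0 < S) (hA : 0 < A) (hr : 0 < r)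
    (hp : 0 < p) (hpn : δ < n / p) :
    ∃ K > 0, ∃ ρ > 0, S * (K ^ (1 / p) * ρ ^ δ) = r ∧ K * ρ ^ n = A ^ p ∧
      ρ ^ n = S ^ (n * p / (n - δ * p)) * (A / r) ^ (n * p / (n - δ * p)) := by
  have hδn : 0 < n - δ * p := sub_pos.2 ((lt_div_iff₀ hp).1 hpn)
  set ρ := (S * (A / r)) ^ (p / (n - δ * p)) with hρ
  have hρ₀ : 0 < ρ := by positivity
  refine ⟨A ^ p / ρ ^ n, by positivity, ρ, hρ₀, ?_, div_mul_cancel₀ _ (by positivity), ?_⟩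
  · have hρ' : ρ ^ (δ - n / p) = (S * (A / r))⁻¹ := by
      rw [hρ, ← Real.rpow_mul (by positivity), ← Real.rpow_neg_one]
      congr 1
      rw [div_mul_eq_mul_div, div_eq_iff hδn.ne']
      field_simp
      ring
    have hK : (A ^ p / ρ ^ n) ^ (1 / p) = A * (ρ ^ (n / p))⁻¹ := by
      rw [Real.div_rpow (by positivity) (by positivity), ← Real.rpow_natCast ρ n,
        ← Real.rpow_mul hA.le, ← Real.rpow_mul hρ₀.le, mul_one_div_cancel hp.ne', Real.rpow_one,
        mul_one_div, div_eq_mul_inv]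
    rw [hK, mul_assoc A, ← Real.rpow_neg hρ₀.le, ← Real.rpow_add hρ₀, neg_add_eq_sub, hρ']
    field_simp
  · rw [← Real.mul_rpow hS.le (by positivity), hρ, ← Real.rpow_mul_natCast (by positivity)]
    congr 1
    ring

theorem IsJohnDomain.exists_hasWeakOscillationBound (n : ℕ) (hc : 0 < c) (hτ : 0 < τ) (hδ : 0 < δ)
    (hp : 1 ≤ p) (hpn : δ < n / p) :
    ∃ C > 0, ∀ D, IsJohnDomain n c D →
      HasWeakOscillationBound n δ τ p (n * p / (n - δ * p)) C D := by
  have hp₀ : 0 < p := one_pos.trans_le hp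
  have : NeZero n := ⟨by rintro rfl; exact hδ.not_gt (by simpa using hpn)⟩
  obtain ⟨ε, hε⟩ := exists_isChainRatio hc hτ
  have hS := hε.oscillationConst_pos hδ hpn
  have hω := volume_real_unitBall_pos (n := n)
  refine ⟨volume.real (ball (0 : Eucl n) 1) * 10 ^ n *
    oscillationConst n δ p ε ^ (n * p / (n - δ * p)), by positivity,
    fun D hD u hu A hA r hr hE ↦ ?_⟩
  obtain ⟨K, hK, ρ, hρ, hr', hKρ, hρn⟩ := exists_mul_rpow_mul_rpow_eq hS hA hr hp₀ hpn
  have hDm : MeasurableSet D := hD.1.measurableSet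
  obtain ⟨B, hB, hgood⟩ := exists_volume_le_forall_setLIntegral_closedBall_le hDm
    (measurable_fracEnergyDensity hu) hK
    (by rwa [setLIntegral_fracEnergyDensity, hKρ, ← ENNReal.ofReal_rpow_of_pos hA])
  refine ⟨B ∪ Dᶜ, ?_, fun x hx y hy ↦ ?_⟩
  · calc volume.restrict D (B ∪ Dᶜ) ≤ volume B + 0 := by
          refine (measure_union_le _ _).trans (add_le_add (Measure.restrict_apply_le _ _) ?_)
          rw [Measure.restrict_apply hDm.compl, compl_inter_self, measure_empty]
      _ ≤ _ := by rwa [add_zero, mul_assoc _ (_ ^ _), ← hρn]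
  · have hmem {z : Eucl n} (hz : z ∉ B ∪ Dᶜ) : z ∈ D \ B := by
      simpa [and_comm] using hz
    rw [← hr']
    exact hD.abs_sub_le hε hc hτ hδ hp hpn hu hK.le hρ sdiff_subset hgood (hmem hx) (hmem hy)

end WeakOscillation

section StrongType

open Filter Topology

variable {n : ℕ} {c δ τ p q C : ℝ} {D : Set (Eucl n)} {u w : Eucl n → ℝ}

theorem lt_abs_dyadicClamp_sub {k : ℤ} {s t : ℝ} (hs : s ≤ 2 ^ (k - 1)) (ht : 2 ^ k ≤ t) :
    2 ^ k / 4 < |dyadicClamp k s - dyadicClamp k t| := by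
  have hk : (0 : ℝ) < 2 ^ k := by positivity
  have hk' : (2 : ℝ) ^ (k - 1) = 2 ^ k / 2 := zpow_sub_one₀ two_ne_zero k
  have hs' : dyadicClamp k s = 2 ^ (k - 1) := max_eq_left ((min_le_left _ _).trans hs)
  have ht' : dyadicClamp k t = 2 ^ k := by
    rw [dyadicClamp, min_eq_right ht, max_eq_right (by linarith)]
  rw [hs', ht', abs_sub_comm, lt_abs]
  left
  linarith

namespace HasWeakOscillationBound

theorem mul_volume_setOf_zpow_le_le (h : HasWeakOscillationBound n δ τ p q C D) (hC : 0 ≤ C)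
    (hp : 0 < p) (hw : Measurable w)
    (hhalf : ∀ t > 0, volume.restrict D univ ≤ 2 * volume.restrict D {x | w x ≤ t}) (k : ℤ)
    (hE : fracEnergyTau n δ τ p D (dyadicClamp k ∘ w) ≠ ⊤) :
    ENNReal.ofReal (((2 : ℝ) ^ (k + 1)) ^ q) * volume.restrict D {x | 2 ^ k ≤ w x} ≤
      ENNReal.ofReal (2 * C * 8 ^ q) * fracEnergyTau n δ τ p D (dyadicClamp k ∘ w) ^ (q / p) := by
  refine le_mul_rpow_of_forall_le_ofReal_rpow hp hE ENNReal.ofReal_ne_top fun A hA hEA ↦ ?_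
  obtain ⟨B, hB, hosc⟩ := h _ ((measurable_dyadicClamp k).comp hw) A hA (2 ^ k / 4)
    (by positivity) hEA
  have hscale : ((2 : ℝ) ^ (k + 1)) ^ q * (2 * (C * (A / (2 ^ k / 4)) ^ q)) =
      2 * C * 8 ^ q * A ^ q := by
    have hbase : (2 : ℝ) ^ (k + 1) * (A / (2 ^ k / 4)) = 8 * A := by
      rw [zpow_add_one₀ two_ne_zero]
      field_simp
      norm_num
    rw [mul_assoc (2 * C), ← Real.mul_rpow (by norm_num) hA.le, ← hbase,
      Real.mul_rpow (by positivity) (by positivity)]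
    ring
  calc ENNReal.ofReal (((2 : ℝ) ^ (k + 1)) ^ q) * volume.restrict D {x | 2 ^ k ≤ w x}
      ≤ ENNReal.ofReal (((2 : ℝ) ^ (k + 1)) ^ q) * (2 * volume.restrict D B) := by
        gcongr
        exact measure_le_two_mul_of_abs_sub_le hosc (hhalf (2 ^ (k - 1)) (by positivity))
          fun x hx y hy ↦ lt_abs_dyadicClamp_sub hx hy
    _ ≤ ENNReal.ofReal (((2 : ℝ) ^ (k + 1)) ^ q) *
          (2 * ENNReal.ofReal (C * (A / (2 ^ k / 4)) ^ q)) := by gcongr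
    _ = ENNReal.ofReal (2 * C * 8 ^ q) * ENNReal.ofReal A ^ q := by
        rw [← ENNReal.ofReal_ofNat, ← ENNReal.ofReal_mul zero_le_two,
          ← ENNReal.ofReal_mul (by positivity), hscale, ENNReal.ofReal_mul (by positivity),
          ENNReal.ofReal_rpow_of_pos hA]

theorem setLIntegral_rpow_le (h : HasWeakOscillationBound n δ τ p q C D) (hC : 0 ≤ C)
    (hp : 1 ≤ p) (hpq : p ≤ q) (hw : Measurable w) (hw₀ : 0 ≤ w)
    (hhalf : ∀ t > 0, volume.restrict D univ ≤ 2 * volume.restrict D {x | w x ≤ t})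
    (hE : fracEnergyTau n δ τ p D w ≠ ⊤) :
    ∫⁻ x in D, ENNReal.ofReal (w x ^ q) ≤
      ENNReal.ofReal (2 * C * 8 ^ q) * fracEnergyTau n δ τ p D w ^ (q / p) := by
  have hp₀ : 0 < p := one_pos.trans_le hp
  have hsum : ∑' k : ℤ, fracEnergyTau n δ τ p D (dyadicClamp k ∘ w) ≤ fracEnergyTau n δ τ p D w :=
    tsum_fracEnergyTau_dyadicClamp_le hp hw
  calc ∫⁻ x in D, ENNReal.ofReal (w x ^ q)
      ≤ ∑' k : ℤ, ENNReal.ofReal (((2 : ℝ) ^ (k + 1)) ^ q) *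
          volume.restrict D {x | 2 ^ k ≤ w x} :=
        lintegral_rpow_le_tsum_zpow_mul_measure hw hw₀ (hp₀.trans_le hpq)
    _ ≤ ∑' k : ℤ, ENNReal.ofReal (2 * C * 8 ^ q) *
          fracEnergyTau n δ τ p D (dyadicClamp k ∘ w) ^ (q / p) :=
        ENNReal.tsum_le_tsum fun k ↦ h.mul_volume_setOf_zpow_le_le hC hp₀ hw hhalf k
          (((ENNReal.le_tsum k).trans hsum).trans_lt hE.lt_top).ne
    _ ≤ ENNReal.ofReal (2 * C * 8 ^ q) *
          (∑' k : ℤ, fracEnergyTau n δ τ p D (dyadicClamp k ∘ w)) ^ (q / p) := by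
        rw [ENNReal.tsum_mul_left]
        gcongr
        exact tsum_rpow_le_rpow_tsum _ ((one_le_div hp₀).2 hpq)
    _ ≤ _ := by
        have : 0 ≤ q / p := div_nonneg (hp₀.le.trans hpq) hp₀.le
        gcongr

theorem setLIntegral_max_sub_rpow_le (h : HasWeakOscillationBound n δ τ p q C D) (hC : 0 ≤ C)
    (hp : 1 ≤ p) (hpq : p ≤ q) (hu : Measurable u) {a : ℝ}
    (ha : IsMedian (volume.restrict D) u a) (hE : fracEnergyTau n δ τ p D u ≠ ⊤) :
    ∫⁻ x in D, ENNReal.ofReal (max (u x - a) 0 ^ q) ≤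
      ENNReal.ofReal (2 * C * 8 ^ q) * fracEnergyTau n δ τ p D u ^ (q / p) := by
  have hp₀ : 0 ≤ p := zero_le_one.trans hp
  have hle : fracEnergyTau n δ τ p D (fun x ↦ max (u x - a) 0) ≤ fracEnergyTau n δ τ p D u :=
    fracEnergyTau_le_of_edist_le hp₀ fun x y ↦ by
      simpa only [id_eq, edist_sub_right, ENNReal.coe_one, one_mul] using
        LipschitzWith.id.max_const 0 (u x - a) (u y - a)
  refine (h.setLIntegral_rpow_le hC hp hpq ((hu.sub_const a).max measurable_const)
    (fun x ↦ le_max_right _ _) (fun t ht ↦ ha.measure_univ_le_max_sub ht)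
    (hle.trans_lt hE.lt_top).ne).trans ?_
  exact mul_le_mul_right (ENNReal.rpow_le_rpow hle (div_nonneg (hp₀.trans hpq) hp₀)) _

theorem setLIntegral_abs_sub_rpow_le (h : HasWeakOscillationBound n δ τ p q C D) (hC : 0 ≤ C)
    (hp : 1 ≤ p) (hpq : p ≤ q) (hu : Measurable u) {a : ℝ}
    (ha : IsMedian (volume.restrict D) u a) (hE : fracEnergyTau n δ τ p D u ≠ ⊤) :
    ∫⁻ x in D, ENNReal.ofReal (|u x - a| ^ q) ≤
      ENNReal.ofReal (4 * C * 8 ^ q) * fracEnergyTau n δ τ p D u ^ (q / p) := by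
  have hp₀ : 0 ≤ p := zero_le_one.trans hp
  have hEneg : fracEnergyTau n δ τ p D (-u) ≤ fracEnergyTau n δ τ p D u :=
    fracEnergyTau_le_of_edist_le hp₀ fun x y ↦ (edist_neg_neg _ _).le
  have hsplit (s : ℝ) : ENNReal.ofReal (|s| ^ q) ≤
      ENNReal.ofReal (max s 0 ^ q) + ENNReal.ofReal (max (-s) 0 ^ q) := by
    rcases le_total 0 s with hs | hs
    · rw [abs_of_nonneg hs, max_eq_left hs]
      exact le_self_add
    · rw [abs_of_nonpos hs, max_eq_left (neg_nonneg.2 hs)]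
      exact le_add_self
  calc ∫⁻ x in D, ENNReal.ofReal (|u x - a| ^ q)
      ≤ ∫⁻ x in D, (ENNReal.ofReal (max (u x - a) 0 ^ q) +
          ENNReal.ofReal (max ((-u) x - -a) 0 ^ q)) := by
        refine lintegral_mono fun x ↦ (hsplit (u x - a)).trans_eq ?_
        rw [Pi.neg_apply, neg_sub_neg, neg_sub]
    _ = (∫⁻ x in D, ENNReal.ofReal (max (u x - a) 0 ^ q)) +
          ∫⁻ x in D, ENNReal.ofReal (max ((-u) x - -a) 0 ^ q) :=
        lintegral_add_left (by fun_prop) _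
    _ ≤ ENNReal.ofReal (2 * C * 8 ^ q) * fracEnergyTau n δ τ p D u ^ (q / p) +
          ENNReal.ofReal (2 * C * 8 ^ q) * fracEnergyTau n δ τ p D (-u) ^ (q / p) :=
        add_le_add (h.setLIntegral_max_sub_rpow_le hC hp hpq hu ha hE)
          (h.setLIntegral_max_sub_rpow_le hC hp hpq hu.neg ha.neg (hEneg.trans_lt hE.lt_top).ne)
    _ ≤ ENNReal.ofReal (2 * C * 8 ^ q) * fracEnergyTau n δ τ p D u ^ (q / p) +
          ENNReal.ofReal (2 * C * 8 ^ q) * fracEnergyTau n δ τ p D u ^ (q / p) := by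
        have : 0 ≤ q / p := div_nonneg (hp₀.trans hpq) hp₀
        gcongr
    _ = _ := by
        rw [← add_mul, ← ENNReal.ofReal_add (by positivity) (by positivity)]
        ring_nf

theorem rpow_setLIntegral_abs_sub_rpow_le (h : HasWeakOscillationBound n δ τ p q C D) (hC : 0 ≤ C)
    (hp : 1 ≤ p) (hpq : p ≤ q) (hu : Measurable u) {a : ℝ}
    (ha : IsMedian (volume.restrict D) u a) (hE : fracEnergyTau n δ τ p D u ≠ ⊤) :
    (∫⁻ x in D, ENNReal.ofReal (|u x - a| ^ q)) ^ q⁻¹ ≤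
      ENNReal.ofReal ((4 * C * 8 ^ q) ^ q⁻¹) * fracEnergyTau n δ τ p D u ^ (1 / p) := by
  have hq : 0 < q := one_pos.trans_le (hp.trans hpq)
  rw [ENNReal.rpow_inv_le_iff hq, ENNReal.mul_rpow_of_nonneg _ _ hq.le, ← ENNReal.rpow_mul,
    ENNReal.ofReal_rpow_of_nonneg (by positivity) hq.le, Real.rpow_inv_rpow (by positivity) hq.ne',
    one_div_mul_eq_div]
  exact h.setLIntegral_abs_sub_rpow_le hC hp hpq hu ha hE

theorem exists_isMedian (h : HasWeakOscillationBound n δ τ p q C D) (hp : 0 < p) (hq : 0 < q)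
    (hD : volume D ≠ 0) (hu : Measurable u) (hE : fracEnergyTau n δ τ p D u ≠ ⊤) :
    ∃ a, IsMedian (volume.restrict D) u a := by
  obtain ⟨A, hA, hEA⟩ : ∃ A > 0, fracEnergyTau n δ τ p D u ≤ ENNReal.ofReal A ^ p := by
    refine ⟨(fracEnergyTau n δ τ p D u ^ p⁻¹).toReal + 1, by positivity, ?_⟩
    rw [← ENNReal.rpow_inv_le_iff hp]
    refine (ENNReal.ofReal_toReal (ENNReal.rpow_ne_top_of_nonneg (inv_nonneg.2 hp.le) hE)).ge.trans
      (ENNReal.ofReal_le_ofReal (le_add_of_nonneg_right zero_le_one))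
  have hlim : Tendsto (fun r ↦ 2 * ENNReal.ofReal (C * (A / r) ^ q)) atTop (𝓝 0) := by
    have hdiv : Tendsto (fun r ↦ C * (A / r) ^ q) atTop (𝓝 0) := by
      simpa [Real.zero_rpow hq.ne'] using
        ((tendsto_id.const_div_atTop A).rpow_const (.inr hq.le)).const_mul C
    simpa using ENNReal.Tendsto.const_mul (ENNReal.tendsto_ofReal hdiv) (.inr ENNReal.ofNat_ne_top)
  obtain ⟨r, hrD, hr⟩ := ((hlim.eventually_lt_const (pos_iff_ne_zero.2 hD)).and
    (eventually_gt_atTop 0)).exists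
  obtain ⟨B, hB, hosc⟩ := h u hu A hA r hr hEA
  have hBD : 2 * volume.restrict D B < volume.restrict D univ := by
    rw [Measure.restrict_apply_univ]
    exact (mul_le_mul_right hB 2).trans_lt hrD
  obtain ⟨x₀, hx₀⟩ : ∃ x₀, x₀ ∉ B := by
    by_contra! hall
    rw [eq_univ_of_forall hall] at hBD
    exact (le_mul_of_one_le_left' one_le_two).not_gt hBD
  refine _root_.exists_isMedian hBD (M := |u x₀| + r) fun x hx ↦ ?_
  have := abs_sub_abs_le_abs_sub (u x) (u x₀)
  have := hosc x hx x₀ hx₀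
  linarith

end HasWeakOscillationBound

theorem IsJohnDomain.volume_eq_top (hD : IsJohnDomain n c D) (hc : 0 < c)
    (hunb : ¬Bornology.IsBounded D) : volume D = ⊤ := by
  obtain ⟨x, hx⟩ := hD.2.1.nonempty
  have hn : n ≠ 0 := by
    rintro rfl
    exact hunb (Set.toFinite D).isBounded
  have hlarge (R : ℝ) (hR : 0 < R) :
      ENNReal.ofReal (R ^ n * volume.real (ball (0 : Eucl n) 1)) ≤ volume D := by
    obtain ⟨y, hy, hxy⟩ : ∃ y ∈ D, 2 * (c * R) < dist x y := by
      by_contra! hle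
      exact hunb (isBounded_closedBall.subset fun y hy ↦ mem_closedBall'.2 (hle y hy))
    have hne : x ≠ y := dist_pos.1 (lt_trans (by positivity) hxy)
    obtain ⟨L, hL, γ, γ', rfl, rfl, hmeet, hγ, hγ'⟩ := hD.exists_isCarrotArc hx hy hne
    have hLmem : L ∈ Icc 0 L := right_mem_Icc.2 hL.le
    have hRL : R ≤ L / c := by
      have := dist_triangle_left (γ 0) (γ' 0) (γ L)
      have := hγ.dist_zero_le hLmem
      have := hmeet ▸ hγ'.dist_zero_le hLmem
      rw [le_div_iff₀ hc]
      linarith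
    rw [← volume_ball_eq_ofReal (γ L) hR]
    exact measure_mono ((ball_subset_ball (hRL.trans (hγ.div_le_infDist L hLmem))).trans
      (ball_infDist_frontier_subset (hγ.mem L hLmem)))
  have hlim : Tendsto
      (fun R : ℝ ↦ ENNReal.ofReal (R ^ n * volume.real (ball (0 : Eucl n) 1)))
      atTop (𝓝 ⊤) :=
    ENNReal.tendsto_ofReal_atTop.comp
      ((tendsto_pow_atTop hn).atTop_mul_const volume_real_unitBall_pos)
  exact top_le_iff.1 (le_of_tendsto hlim ((eventually_gt_atTop 0).mono hlarge))

end StrongType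

theorem statement17_general (n : ℕ) {c τ δ p : ℝ} (hc : 0 < c) (hτ : 0 < τ) (hδ : 0 < δ)
    (hp : 1 ≤ p) (hpn : p < n / δ) :
    ∃ C : ℝ, 0 < C ∧ ∀ D : Set (Eucl n), IsJohnDomain n c D →
      (∀ u : Eucl n → ℝ, Measurable u → fracEnergyTau n δ τ p D u < ⊤ →
        ∃ a : ℝ, (∫⁻ x in D, ENNReal.ofReal (|u x - a| ^ (n * p / (n - δ * p)))) ^
            ((n - δ * p) / (n * p)) ≤
          ENNReal.ofReal C * fracEnergyTau n δ τ p D u ^ (1 / p)) ∧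
      (¬Bornology.IsBounded D → ∀ u : Eucl n → ℝ, Measurable u → fracEnergyTau n δ τ p D u < ⊤ →
        volume (D ∩ Function.support u) < ⊤ →
          (∫⁻ x in D, ENNReal.ofReal (|u x| ^ (n * p / (n - δ * p)))) ^
            ((n - δ * p) / (n * p)) ≤
          ENNReal.ofReal C * fracEnergyTau n δ τ p D u ^ (1 / p)) := by
  have hp₀ : 0 < p := one_pos.trans_le hp
  have hδpn : δ * p < n := by rwa [mul_comm, ← lt_div_iff₀ hδ]
  have hpq : p ≤ n * p / (n - δ * p) := by
    rw [le_div_iff₀ (sub_pos.2 hδpn), mul_comm]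
    gcongr
    exact sub_le_self _ (by positivity)
  obtain ⟨C, hC, hweak⟩ := IsJohnDomain.exists_hasWeakOscillationBound n hc hτ hδ hp
    ((lt_div_iff₀ hp₀).2 hδpn)
  set q : ℝ := n * p / (n - δ * p)
  rw [show (n - δ * p) / (n * p) = q⁻¹ from (inv_div _ _).symm]
  refine ⟨(4 * C * 8 ^ q) ^ q⁻¹, by positivity,
    fun D hD ↦ ⟨fun u hu hE ↦ ?_, fun hunb u hu hE hsupp ↦ ?_⟩⟩
  · obtain ⟨a, ha⟩ := (hweak D hD).exists_isMedian hp₀ (hp₀.trans_le hpq)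
      (hD.1.measure_pos volume hD.2.1.nonempty).ne' hu hE.ne
    exact ⟨a, (hweak D hD).rpow_setLIntegral_abs_sub_rpow_le hC.le hp hpq hu ha hE.ne⟩
  · have h₀ : IsMedian (volume.restrict D) u 0 := by
      refine isMedian_zero (by rw [Measure.restrict_apply_univ, hD.volume_eq_top hc hunb]) ?_
      rw [Measure.restrict_apply' hD.1.measurableSet, inter_comm]
      exact hsupp.ne
    simpa only [sub_zero] using
      (hweak D hD).rpow_setLIntegral_abs_sub_rpow_le hC.le hp hpq hu h₀ hE.ne

/-- Embedding of the homogeneous space: for a (bounded or unbounded)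
`c`-John domain `D ⊆ ℝⁿ`, `n ≥ 2`, `τ, δ ∈ (0,1)`, `1 ≤ p < n/δ` and
`q = np/(n-δp)`, there is `C = C(δ,τ,p,n,c)` such that every measurable `u : D → ℝ` with
`|u|_{W^{δ,p}_τ(D)} < ∞` admits `a_u ∈ ℝ` with
`‖u - a_u‖_{L^q(D)} ≤ C |u|_{W^{δ,p}_τ(D)}`; if moreover `D` is unbounded and `u` has
compact support in `D`, then one can take `a_u = 0`. -/
theorem statement17 (n : ℕ) (hn : 2 ≤ n) (c : ℝ) (hc : 1 ≤ c)
    (τ δ p : ℝ) (hτ : τ ∈ Ioo (0:ℝ) 1) (hδ : δ ∈ Ioo (0:ℝ) 1)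
    (hp : 1 ≤ p) (hpn : p < n / δ) :
    ∃ C : ℝ, 0 < C ∧
      ∀ D : Set (Eucl n), IsJohnDomain n c D →
        (∀ u : Eucl n → ℝ, Measurable u → fracEnergyTau n δ τ p D u < ⊤ →
          ∃ a : ℝ,
            (∫⁻ x in D, ENNReal.ofReal
                (|u x - a| ^ ((n:ℝ) * p / ((n:ℝ) - δ * p))) ∂volume) ^
                (((n:ℝ) - δ * p) / ((n:ℝ) * p))
              ≤ ENNReal.ofReal C * fracEnergyTau n δ τ p D u ^ (1 / p)) ∧
        (¬ Bornology.IsBounded D →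
          ∀ u : Eucl n → ℝ, Measurable u → fracEnergyTau n δ τ p D u < ⊤ →
            HasCompactSupport u → tsupport u ⊆ D →
            (∫⁻ x in D, ENNReal.ofReal
                (|u x| ^ ((n:ℝ) * p / ((n:ℝ) - δ * p))) ∂volume) ^
                (((n:ℝ) - δ * p) / ((n:ℝ) * p))
              ≤ ENNReal.ofReal C * fracEnergyTau n δ τ p D u ^ (1 / p)) := by
  obtain ⟨C, hC, h⟩ := statement17_general n (one_pos.trans_le hc) hτ.1 hδ.1 hp hpn
  exact ⟨C, hC, fun D hD ↦ ⟨(h D hD).1, fun hunb u hu hE hcs _ ↦ (h D hD).2 hunb u hu hE <|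
    (measure_mono (inter_subset_right.trans (subset_tsupport u))).trans_lt
      hcs.isCompact.measure_lt_top⟩⟩
end
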